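/- Let d ≥ 1, a ≥ 0, r ≥ 2 and 2 < q < ∞ with 2/q + d/r = (d+a+1)/2. Then there exists a constant C = C(d,a,r) > 0 such that for every F ∈ 𝒮(ℝ^{d+1}_+×ℝ), the function W(X,t) := ∫_ℝ ∫_{ℝ^{d+1}_+} 𝕊_a(X,Y,t−τ) F(Y,τ) dω_a(Y) dτ (that is, W = 𝕋_a^*𝕋_a(F)) satisfies sup_{z>0} ‖W(·,z,·)‖_{L^q_tL^r_x} ≤ C · ∫₀^∞ ‖F(·,ζ,·)‖_{L^{q'}_tL^{r'}_x} ζ^a dζ. -/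

import Mathlib

open MeasureTheory Filter Complex
open scoped ENNReal NNReal Topology

noncomputable section

/-- Bessel function of the first kind of order `ν`, via its power series. -/
def besselJ (ν : ℝ) (x : ℝ) : ℝ :=
  ∑' k : ℕ, ((-1 : ℝ) ^ k / ((k.factorial : ℝ) * Real.Gamma ((k : ℝ) + ν + 1))) *
    (x / 2) ^ (2 * (k : ℝ) + ν)

/-- The half-line Schrödinger–Bessel kernel `S_a(z,ζ,t)`. -/
def SaK (a : ℝ) (z ζ t : ℝ) : ℂ :=
  (Complex.exp (-Complex.I * ((Real.sign t : ℝ) : ℂ) * (((a + 1) * Real.pi / 4 : ℝ) : ℂ)) /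
      (((2 * |t|) ^ ((a + 1) / 2) : ℝ) : ℂ)) *
    (((z * ζ / (2 * |t|)) ^ ((1 - a) / 2) : ℝ) : ℂ) *
    ((besselJ ((a - 1) / 2) (z * ζ / (2 * |t|)) : ℝ) : ℂ) *
    Complex.exp (Complex.I * ((z ^ 2 + ζ ^ 2 : ℝ) : ℂ) / ((4 * t : ℝ) : ℂ))

/-- The boundary kernel `S_a(z,0,t)`. -/
def Sa0 (a : ℝ) (z t : ℝ) : ℂ :=
  ((((2 : ℝ) ^ (-a) / Real.Gamma ((a + 1) / 2) : ℝ)) : ℂ) *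
    Complex.exp (-Complex.I * ((Real.sign t : ℝ) : ℂ) * (((a + 1) * Real.pi / 4 : ℝ) : ℂ)) *
    (((|t| ^ (-((a + 1) / 2)) : ℝ)) : ℂ) *
    Complex.exp (Complex.I * ((z ^ 2 : ℝ) : ℂ) / ((4 * t : ℝ) : ℂ))

/-- The free Schrödinger kernel on `ℝ^d` (principal branch of the power). -/
def Sfree (d : ℕ) (x y : Fin d → ℝ) (t : ℝ) : ℂ :=
  (4 * (Real.pi : ℂ) * Complex.I * (t : ℂ)) ^ (-(d : ℂ) / 2) *
    Complex.exp (Complex.I * ((∑ i, (x i - y i) ^ 2 : ℝ) : ℂ) / ((4 * t : ℝ) : ℂ))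

/-- The full half-space kernel `𝕊_a(X,Y,t) = S_a(z,ζ,t)·S(x,y,t)`. -/
def SK (d : ℕ) (a : ℝ) (X Y : (Fin d → ℝ) × ℝ) (t : ℝ) : ℂ :=
  SaK a X.2 Y.2 t * Sfree d X.1 Y.1 t

/-- The weighted measure `dω_a = z^a dx dz` on the half-space `ℝ^d × (0,∞)`. -/
def ωa (d : ℕ) (a : ℝ) : Measure ((Fin d → ℝ) × ℝ) :=
  (volume : Measure (Fin d → ℝ)).prod
    (((volume : Measure ℝ).restrict (Set.Ioi 0)).withDensity fun z => ENNReal.ofReal (z ^ a))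

/-- The mixed norm `‖Φ‖_{L^q_t L^r_x}`. -/
def mixNorm (d : ℕ) (q r : ℝ) (Φ : (Fin d → ℝ) → ℝ → ℂ) : ℝ≥0∞ :=
  (∫⁻ t : ℝ, (∫⁻ x : Fin d → ℝ, (‖Φ x t‖₊ : ℝ≥0∞) ^ r) ^ (q / r)) ^ (1 / q)

/-- The mixed norm `‖Φ‖_{L^q_T L^r_x}` over the time interval `[0,T]`. -/
def mixNormT (d : ℕ) (T q r : ℝ) (Φ : (Fin d → ℝ) → ℝ → ℂ) : ℝ≥0∞ :=
  (∫⁻ t in Set.Ioc (0 : ℝ) T, (∫⁻ x : Fin d → ℝ, (‖Φ x t‖₊ : ℝ≥0∞) ^ r) ^ (q / r)) ^ (1 / q)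

/-- The homogeneous propagator `𝕋_a^*(u₀)`. -/
def Tstar (d : ℕ) (a : ℝ) (u₀ : (Fin d → ℝ) × ℝ → ℂ) (X : (Fin d → ℝ) × ℝ) (t : ℝ) : ℂ :=
  if t = 0 then u₀ X else ∫ Y, SK d a X Y t * u₀ Y ∂(ωa d a)

/-- The inhomogeneous Duhamel term `𝔻_a(F)`. -/
def Dop (d : ℕ) (a : ℝ) (F : (Fin d → ℝ) × ℝ → ℝ → ℂ) (X : (Fin d → ℝ) × ℝ) (t : ℝ) : ℂ :=
  ∫ τ in (0 : ℝ)..t, ∫ Y, SK d a X Y (t - τ) * F Y τ ∂(ωa d a)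

/-- The boundary-data operator `Θ_a^*(Φ)`. -/
def ThetaStar (d : ℕ) (a : ℝ) (Φ : (Fin d → ℝ) → ℝ → ℂ) (X : (Fin d → ℝ) × ℝ) (t : ℝ) : ℂ :=
  Complex.I *
    ∫ τ in (0 : ℝ)..t, ∫ y : Fin d → ℝ, Sa0 a X.2 (t - τ) * Sfree d X.1 y (t - τ) * Φ y τ

/-- The weight `k(z) = min{1, z^{a/2}}`. -/
def kwt (a z : ℝ) : ℝ := min 1 (z ^ (a / 2))

/-- The weight `k^{-1}(z) = max{1, z^{-a/2}}`. -/
def kinv (a z : ℝ) : ℝ := max 1 (z ^ (-a / 2))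

/-!
Up to the factor `(s/2)^ν`, the function `J_ν(s)` is an entire function `R_ν` of `w = s²` with
`R_ν' = -R_{ν+1}/4`. For `ν = (a-1)/2 ≥ -1/2` the energy `R_ν² + (w/4) R_{ν+1}²` is nonincreasing in
`w ≥ 0`, so `|S_a(z,ζ,t)| ≤ C |t|^{-(a+1)/2}` uniformly in `z` and `ζ`. On `ℝ^d`, interpolating the
`L²` isometry (Plancherel) with the `L¹ → L^∞` decay bounds the free propagator from `L^{r'}` to
`L^r` by `C |t|^{-d(1/2-1/r)}`. The admissibility condition says that the two decay rates add up to
`2/q`, so Minkowski's inequality in `τ` and `ζ` leaves the fractional integral of order `1 - 2/q` in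
time, which maps `L^{q'}` to `L^q` by Hardy–Littlewood–Sobolev because `2 < q`. The transverse
kernel is bounded before any joint integral is formed: only the free kernel has to be jointly
measurable.
-/

section Duality

variable {α β : Type*} [MeasurableSpace α] [MeasurableSpace β] {μ : Measure α} {ν : Measure β}

theorem exists_simpleFunc_le_lt_lintegral [SigmaFinite μ] {g : α → ℝ≥0∞} {L : ℝ≥0∞}
    (hL : L < ∫⁻ x, g x ∂μ) :
    ∃ φ : SimpleFunc α ℝ≥0, (∀ x, (φ x : ℝ≥0∞) ≤ g x) ∧ L < ∫⁻ x, φ x ∂μ ∧ ∫⁻ x, φ x ∂μ < ∞ := by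
  simp_rw [lintegral_eq_nnreal, lt_iSup_iff] at hL
  obtain ⟨ψ, hψg, hψL⟩ := hL
  rw [← SimpleFunc.lintegral_eq_lintegral, SimpleFunc.coe_map] at hψL
  obtain ⟨φ, hφψ, hφ, hLφ⟩ := SimpleFunc.exists_lt_lintegral_simpleFunc_of_lt_lintegral hψL
  exact ⟨φ, fun x => (ENNReal.coe_le_coe.2 (hφψ x)).trans (hψg x), hLφ, hφ⟩

theorem eLpNorm'_le_of_forall_lintegral_mul_le [SigmaFinite μ] {p q : ℝ}
    (hpq : p.HolderConjugate q) {g : α → ℝ≥0∞} {M : ℝ≥0∞}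
    (H : ∀ h : α → ℝ≥0∞, Measurable h → ∫⁻ x, h x ^ q ∂μ = 1 → ∫⁻ x, g x * h x ∂μ ≤ M) :
    eLpNorm' g p μ ≤ M := by
  by_contra! hM
  have hL : M ^ p < ∫⁻ x, g x ^ p ∂μ := by
    simpa [eLpNorm', ← ENNReal.rpow_mul, hpq.ne_zero] using ENNReal.rpow_lt_rpow hM hpq.pos
  obtain ⟨φ, hφg, hLφ, hφ⟩ := exists_simpleFunc_le_lt_lintegral hL
  set I := ∫⁻ x, φ x ∂μ
  have hI : I ≠ 0 := hLφ.ne_bot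
  have hexp : p⁻¹ + q⁻¹ = 1 := hpq.inv_add_inv_eq_one
  let h : α → ℝ≥0∞ := fun x => (φ x : ℝ≥0∞) ^ q⁻¹ * I⁻¹ ^ q⁻¹
  have hφ_root (x : α) : (φ x : ℝ≥0∞) ^ p⁻¹ ≤ g x :=
    (ENNReal.rpow_inv_le_iff hpq.pos).2 (hφg x)
  have h_norm : ∫⁻ x, h x ^ q ∂μ = 1 := by
    have hpow (x : α) : h x ^ q = φ x * I⁻¹ := by
      rw [ENNReal.mul_rpow_of_nonneg _ _ hpq.symm.nonneg, ENNReal.rpow_inv_rpow hpq.symm.ne_zero,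
        ENNReal.rpow_inv_rpow hpq.symm.ne_zero]
    simp_rw [hpow]
    rw [lintegral_mul_const _ φ.measurable.coe_nnreal_ennreal, ENNReal.mul_inv_cancel hI hφ.ne]
  refine (H h (by fun_prop) h_norm).not_gt ?_
  calc M < I ^ p⁻¹ := (ENNReal.lt_rpow_inv_iff hpq.pos).2 hLφ
    _ = I * I⁻¹ ^ q⁻¹ := by
      rw [ENNReal.inv_rpow, ← ENNReal.rpow_neg, ← sub_eq_of_eq_add hexp.symm, sub_eq_add_neg,
        ENNReal.rpow_add _ _ hI hφ.ne, ENNReal.rpow_one]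
    _ = ∫⁻ x, (φ x : ℝ≥0∞) ^ p⁻¹ * h x ∂μ := by
      rw [← lintegral_mul_const _ φ.measurable.coe_nnreal_ennreal]
      refine lintegral_congr fun x => ?_
      rw [← mul_assoc, ← ENNReal.rpow_add_of_nonneg _ _ (inv_nonneg.2 hpq.nonneg)
        (inv_nonneg.2 hpq.symm.nonneg), hexp, ENNReal.rpow_one]
    _ ≤ ∫⁻ x, g x * h x ∂μ := by gcongr with x; exact hφ_root x

theorem eLpNorm'_lintegral_le [SigmaFinite μ] [SFinite ν] {p : ℝ} (hp : 1 ≤ p)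
    {f : α → β → ℝ≥0∞} (hf : Measurable f.uncurry) :
    eLpNorm' (fun x => ∫⁻ y, f x y ∂ν) p μ ≤ ∫⁻ y, eLpNorm' (fun x => f x y) p μ ∂ν := by
  obtain rfl | hp := hp.eq_or_lt
  · simpa [eLpNorm'] using (lintegral_lintegral_swap hf.aemeasurable).le
  have hpq := Real.HolderConjugate.conjExponent hp
  refine eLpNorm'_le_of_forall_lintegral_mul_le hpq fun h hh h_norm => ?_
  calc ∫⁻ x, (∫⁻ y, f x y ∂ν) * h x ∂μ = ∫⁻ x, ∫⁻ y, f x y * h x ∂ν ∂μ := by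
        refine lintegral_congr fun x => ?_
        rw [lintegral_mul_const _ (by fun_prop)]
    _ = ∫⁻ y, ∫⁻ x, f x y * h x ∂μ ∂ν :=
        lintegral_lintegral_swap (hf.mul (hh.comp measurable_fst)).aemeasurable
    _ ≤ ∫⁻ y, eLpNorm' (fun x => f x y) p μ ∂ν := by
        refine lintegral_mono fun y => ?_
        simpa [h_norm, eLpNorm'] using ENNReal.lintegral_mul_le_Lp_mul_Lq μ hpq
          (f := fun x => f x y) (hf.comp measurable_prodMk_right).aemeasurable hh.aemeasurable

end Duality

section FractionalIntegration

open Module Metric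

variable {E : Type*} [NormedAddCommGroup E] [NormedSpace ℝ E] [FiniteDimensional ℝ E]
  [MeasurableSpace E] [BorelSpace E] (μ : Measure E) [μ.IsAddHaarMeasure]

theorem lintegral_eq_mul_lintegral_comp_smul (f : E → ℝ≥0∞) {R : ℝ} (hR : R ≠ 0) :
    ∫⁻ x, f x ∂μ = ENNReal.ofReal (|R| ^ (finrank ℝ E : ℝ)) * ∫⁻ x, f (R • x) ∂μ := by
  have : 0 < |R| := abs_pos.2 hR
  have hmap : ∫⁻ x, f (R • x) ∂μ = ENNReal.ofReal (|R| ^ finrank ℝ E)⁻¹ * ∫⁻ x, f x ∂μ := by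
    rw [← abs_pow, ← abs_inv, ← smul_eq_mul, ← lintegral_smul_measure,
      ← Measure.map_addHaar_smul μ hR]
    exact ((Homeomorph.smulOfNeZero R hR).measurableEmbedding.lintegral_map f).symm
  rw [hmap, ← mul_assoc, ← ENNReal.ofReal_mul (by positivity), Real.rpow_natCast,
    mul_inv_cancel₀ (by positivity), ENNReal.ofReal_one, one_mul]

theorem lintegral_mul_norm_rpow_neg_comp_smul (f : E → ℝ≥0∞) {R : ℝ} (hR : 0 < R) (s : ℝ) :
    ∫⁻ x, f x * ENNReal.ofReal (‖x‖ ^ (-s)) ∂μ =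
      ENNReal.ofReal (R ^ (finrank ℝ E - s)) *
        ∫⁻ x, f (R • x) * ENNReal.ofReal (‖x‖ ^ (-s)) ∂μ := by
  have hker (x : E) : f (R • x) * ENNReal.ofReal (‖R • x‖ ^ (-s)) =
      ENNReal.ofReal (R ^ (-s)) * (f (R • x) * ENNReal.ofReal (‖x‖ ^ (-s))) := by
    rw [norm_smul, Real.norm_of_nonneg hR.le, Real.mul_rpow hR.le (norm_nonneg x),
      ENNReal.ofReal_mul (by positivity)]
    ring
  rw [lintegral_eq_mul_lintegral_comp_smul μ _ hR.ne', abs_of_pos hR]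
  simp_rw [hker]
  rw [lintegral_const_mul' _ _ ENNReal.ofReal_ne_top, ← mul_assoc,
    ← ENNReal.ofReal_mul (by positivity), ← Real.rpow_add hR, sub_eq_add_neg]

theorem setLIntegral_ball_norm_rpow_neg_lt_top {s : ℝ} (hs : s < finrank ℝ E) (hs' : 0 ≤ s) :
    ∫⁻ x in ball (0 : E) 1, ENNReal.ofReal (‖x‖ ^ (-s)) ∂μ < ∞ := by
  have hdim : 1 ≤ finrank ℝ E := by exact_mod_cast hs'.trans_lt hs
  refine (integrableOn_ball_of_norm_le_rpow (C := 1) (α := s) hdim hs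
    (ae_of_all _ fun x => ?_) (Measurable.aestronglyMeasurable (by fun_prop))).lintegral_lt_top
  rw [one_mul, Real.norm_of_nonneg (by positivity)]

theorem setLIntegral_compl_ball_norm_rpow_neg_lt_top {s : ℝ} (hs : finrank ℝ E < s) :
    ∫⁻ x in (ball (0 : E) 1)ᶜ, ENNReal.ofReal (‖x‖ ^ (-s)) ∂μ < ∞ := by
  have hs₀ : 0 < s := (Nat.cast_nonneg _).trans_lt hs
  calc ∫⁻ x in (ball (0 : E) 1)ᶜ, ENNReal.ofReal (‖x‖ ^ (-s)) ∂μ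
      ≤ ∫⁻ x in (ball (0 : E) 1)ᶜ,
          ENNReal.ofReal (2 ^ s) * ENNReal.ofReal ((1 + ‖x‖) ^ (-s)) ∂μ := by
        refine setLIntegral_mono (by fun_prop) fun x hx => ?_
        have hx₁ : 1 ≤ ‖x‖ := by simpa using hx
        rw [← ENNReal.ofReal_mul (by positivity)]
        refine ENNReal.ofReal_le_ofReal ?_
        rw [Real.rpow_neg (by positivity), Real.rpow_neg (by positivity), ← div_eq_mul_inv,
          ← Real.div_rpow (by positivity) (by positivity), ← Real.inv_rpow (by positivity)]
        gcongr
        field_simp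
        linarith
    _ ≤ ∫⁻ x, ENNReal.ofReal (2 ^ s) * ENNReal.ofReal ((1 + ‖x‖) ^ (-s)) ∂μ :=
        setLIntegral_le_lintegral _ _
    _ < ∞ := by
        rw [lintegral_const_mul _ (by fun_prop)]
        exact ENNReal.mul_lt_top ENNReal.ofReal_lt_top (finite_integral_one_add_norm hs)

variable {p p' q q' s : ℝ}

theorem exists_lintegral_min_one_mul_norm_rpow_le (hp : p.HolderConjugate p') (hs : 0 ≤ s)
    (hsn : s < finrank ℝ E) (hsp : finrank ℝ E < s * p') :
    ∃ C ≠ ∞, ∀ g : E → ℝ≥0∞, Measurable g → ∫⁻ y, g y ^ p ∂μ = 1 →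
      ∫⁻ y, min (g y) 1 * ENNReal.ofReal (‖y‖ ^ (-s)) ∂μ ≤ C := by
  let near := ∫⁻ x in ball (0 : E) 1, ENNReal.ofReal (‖x‖ ^ (-s)) ∂μ
  let far := eLpNorm' (fun x : E => ENNReal.ofReal (‖x‖ ^ (-s))) p' (μ.restrict (ball 0 1)ᶜ)
  have h_far : far ≠ ∞ := by
    have hpow (x : E) : ENNReal.ofReal (‖x‖ ^ (-s)) ^ p' = ENNReal.ofReal (‖x‖ ^ (-(s * p'))) := by
      rw [ENNReal.ofReal_rpow_of_nonneg (by positivity) hp.symm.nonneg,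
        ← Real.rpow_mul (norm_nonneg x), neg_mul]
    simpa [far, eLpNorm', hpow, hp.symm.pos, hp.symm.nonneg] using
      (setLIntegral_compl_ball_norm_rpow_neg_lt_top μ hsp).ne
  refine ⟨near + far, ENNReal.add_ne_top.2
    ⟨(setLIntegral_ball_norm_rpow_neg_lt_top μ hsn hs).ne, h_far⟩, fun g hg hg_norm => ?_⟩
  rw [← lintegral_add_compl _ (measurableSet_ball (x := (0 : E)) (ε := 1))]
  refine add_le_add (lintegral_mono fun y => ?_) ?_
  · exact mul_le_of_le_one_left' (min_le_right _ _)
  calc ∫⁻ y in (ball 0 1)ᶜ, min (g y) 1 * ENNReal.ofReal (‖y‖ ^ (-s)) ∂μ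
      ≤ ∫⁻ y in (ball 0 1)ᶜ, g y * ENNReal.ofReal (‖y‖ ^ (-s)) ∂μ := by
        gcongr with y
        exact min_le_left _ _
    _ ≤ (∫⁻ y in (ball 0 1)ᶜ, g y ^ p ∂μ) ^ (1 / p) * far := by
        simpa [far, eLpNorm'] using ENNReal.lintegral_mul_le_Lp_mul_Lq (μ.restrict (ball 0 1)ᶜ) hp
          (g := fun y : E => ENNReal.ofReal (‖y‖ ^ (-s))) hg.aemeasurable (by fun_prop)
    _ ≤ 1 * far := by
        gcongr
        refine ENNReal.rpow_le_one ?_ (one_div_nonneg.2 hp.nonneg)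
        exact (setLIntegral_le_lintegral _ _).trans hg_norm.le
    _ = far := one_mul _

theorem exists_lintegral_min_rpow_mul_norm_rpow_le (hp : p.HolderConjugate p') (hq' : 0 < q')
    (hs : s = finrank ℝ E * (p'⁻¹ + q'⁻¹)) (hsn : s < finrank ℝ E) :
    ∃ C ≠ ∞, ∀ g : E → ℝ≥0∞, Measurable g → ∫⁻ y, g y ^ p ∂μ = 1 → ∀ R : ℝ, 0 < R →
      ∫⁻ y, min (g y) (ENNReal.ofReal (R ^ (-(finrank ℝ E / p)))) *
        ENNReal.ofReal (‖y‖ ^ (-s)) ∂μ ≤ C * ENNReal.ofReal (R ^ (-(finrank ℝ E / q'))) := by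
  have hp' := hp.symm.pos
  have hs₀ : 0 ≤ s := by rw [hs]; positivity
  have hn : (0 : ℝ) < finrank ℝ E := hs₀.trans_lt hsn
  have hsp : finrank ℝ E < s * p' := by
    rw [hs, mul_assoc, add_mul, inv_mul_cancel₀ hp'.ne']
    exact lt_mul_of_one_lt_right hn (lt_add_of_pos_right _ (by positivity))
  obtain ⟨C, hC, hC_le⟩ := exists_lintegral_min_one_mul_norm_rpow_le μ hp hs₀ hsn hsp
  refine ⟨C, hC, fun g hg hg_norm R hR => ?_⟩
  let b := ENNReal.ofReal (R ^ (-(finrank ℝ E / p)))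
  have hb₀ : b ≠ 0 := (ENNReal.ofReal_pos.2 (by positivity)).ne'
  have h_norm : ∫⁻ y, (b⁻¹ * g (R • y)) ^ p ∂μ = 1 := by
    have hb : b⁻¹ ^ p = ENNReal.ofReal (R ^ (finrank ℝ E : ℝ)) := by
      rw [← ENNReal.ofReal_inv_of_pos (by positivity),
        ENNReal.ofReal_rpow_of_nonneg (by positivity) hp.nonneg, Real.rpow_neg hR.le, inv_inv,
        ← Real.rpow_mul hR.le, div_mul_cancel₀ _ hp.ne_zero]
    simp_rw [ENNReal.mul_rpow_of_nonneg _ _ hp.nonneg]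
    rw [lintegral_const_mul _ (by fun_prop), hb]
    nth_rewrite 1 [← abs_of_pos hR]
    rw [← lintegral_eq_mul_lintegral_comp_smul μ (fun y => g y ^ p) hR.ne', hg_norm]
  have h_min (y : E) : min (g (R • y)) b = b * min (b⁻¹ * g (R • y)) 1 := by
    rw [mul_min, ENNReal.mul_inv_cancel_left hb₀ ENNReal.ofReal_ne_top, mul_one]
  rw [lintegral_mul_norm_rpow_neg_comp_smul μ (fun y => min (g y) b) hR]
  simp_rw [h_min, mul_assoc]
  rw [lintegral_const_mul' _ _ ENNReal.ofReal_ne_top, ← mul_assoc,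
    ← ENNReal.ofReal_mul (by positivity), ← Real.rpow_add hR, mul_comm]
  refine mul_le_mul' (hC_le _ (by fun_prop) h_norm) (le_of_eq ?_)
  rw [hs, ← hp.one_sub_inv]
  ring_nf

theorem exists_lintegral_min_mul_norm_rpow_le (hp : p.HolderConjugate p') (hq' : 0 < q')
    (hs : s = finrank ℝ E * (p'⁻¹ + q'⁻¹)) (hsn : s < finrank ℝ E) :
    ∃ C ≠ ∞, ∀ g : E → ℝ≥0∞, Measurable g → ∫⁻ y, g y ^ p ∂μ = 1 → ∀ b : ℝ≥0∞,
      ∫⁻ y, min (g y) b * ENNReal.ofReal (‖y‖ ^ (-s)) ∂μ ≤ C * b ^ (p / q') := by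
  have hn : (0 : ℝ) < finrank ℝ E := by
    have := hp.symm.pos
    exact lt_of_le_of_lt (by rw [hs]; positivity) hsn
  obtain ⟨C, hC, hC_le⟩ := exists_lintegral_min_rpow_mul_norm_rpow_le μ hp hq' hs hsn
  refine ⟨C + 1, by finiteness, fun g hg hg_norm b => ?_⟩
  obtain rfl | hb_top := eq_or_ne b ∞
  · simp [ENNReal.top_rpow_of_pos (div_pos hp.pos hq')]
  lift b to ℝ≥0 using hb_top
  obtain rfl | hb := eq_zero_or_pos b
  · simp
  have hp₀ := hp.ne_zero
  have ofReal_rpow (u : ℝ) : ENNReal.ofReal (((b : ℝ) ^ (-(p / finrank ℝ E))) ^ u) =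
      (b : ℝ≥0∞) ^ (-(p / finrank ℝ E) * u) := by
    rw [← Real.rpow_mul b.coe_nonneg, ← ENNReal.ofReal_rpow_of_pos (by exact_mod_cast hb),
      ENNReal.ofReal_coe_nnreal]
  have h := hC_le g hg hg_norm ((b : ℝ) ^ (-(p / finrank ℝ E))) (by positivity)
  rw [ofReal_rpow, ofReal_rpow,
    show -(p / finrank ℝ E) * -(finrank ℝ E / p) = 1 by field_simp, ENNReal.rpow_one,
    show -(p / finrank ℝ E) * -(finrank ℝ E / q') = p / q' by field_simp] at h
  exact h.trans (by gcongr; exact le_self_add)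

/-- Splitting each pair according to which factor dominates stands in for the weak-type estimate in
the proof of the Hardy–Littlewood–Sobolev inequality. -/
theorem mul_le_mul_min_rpow_add {α β : ℝ} (hα : 0 < α) (hαβ : α * β = 1) (x y : ℝ≥0∞) :
    x * y ≤ x * min y (x ^ α) + y * min x (y ^ β) := by
  have hβ : 0 < β := pos_of_mul_pos_right (hαβ ▸ one_pos) hα.le
  obtain h | h := le_total y (x ^ α)
  · exact (min_eq_left h).symm ▸ le_self_add
  · have hx : x ≤ y ^ β := by
      rw [← ENNReal.rpow_one x, ← hαβ, ENNReal.rpow_mul]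
      gcongr
    rw [min_eq_left hx, mul_comm y x]
    exact le_add_self

theorem exists_lintegral_mul_lintegral_min_mul_norm_sub_rpow_le (hp : p.HolderConjugate p')
    (hq : q.HolderConjugate q') (hs : s = finrank ℝ E * (p'⁻¹ + q'⁻¹)) (hsn : s < finrank ℝ E) :
    ∃ C ≠ ∞, ∀ f g : E → ℝ≥0∞, Measurable f → Measurable g →
      ∫⁻ x, f x ^ q ∂μ = 1 → ∫⁻ y, g y ^ p ∂μ = 1 →
      ∫⁻ x, f x * ∫⁻ y, min (g y) (f x ^ (q / p)) * ENNReal.ofReal (‖x - y‖ ^ (-s)) ∂μ ∂μ ≤ C := by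
  obtain ⟨C, hC, hC_le⟩ := exists_lintegral_min_mul_norm_rpow_le μ hp hq.symm.pos hs hsn
  refine ⟨C, hC, fun f g hf hg hf_norm hg_norm => ?_⟩
  have h_inner (x : E) :
      ∫⁻ y, min (g y) (f x ^ (q / p)) * ENNReal.ofReal (‖x - y‖ ^ (-s)) ∂μ ≤ C * f x ^ (q - 1) := by
    have h := hC_le (fun y => g (x - y)) (by fun_prop)
      ((lintegral_sub_left_eq_self (fun y => g y ^ p) x).trans hg_norm) (f x ^ (q / p))
    have hexp : q / p * (p / q') = q - 1 := by
      rw [div_mul_div_cancel₀ hp.ne_zero, hq.div_conj_eq_sub_one]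
    rw [← ENNReal.rpow_mul, hexp] at h
    rw [← lintegral_sub_left_eq_self _ x]
    simpa only [sub_sub_cancel] using h
  calc ∫⁻ x, f x * ∫⁻ y, min (g y) (f x ^ (q / p)) * ENNReal.ofReal (‖x - y‖ ^ (-s)) ∂μ ∂μ
      ≤ ∫⁻ x, f x * (C * f x ^ (q - 1)) ∂μ := by gcongr with x; exact h_inner x
    _ = C * ∫⁻ x, f x ^ q ∂μ := by
        rw [← lintegral_const_mul _ (by fun_prop)]
        refine lintegral_congr fun x => ?_
        rw [mul_left_comm]
        nth_rw 1 [← ENNReal.rpow_one (f x)]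
        rw [← ENNReal.rpow_add_of_nonneg _ _ zero_le_one hq.sub_one_pos.le, add_sub_cancel]
    _ = C := by rw [hf_norm, mul_one]

theorem exists_lintegral_lintegral_norm_sub_rpow_mul_mul_le (hp : p.HolderConjugate p')
    (hq : q.HolderConjugate q') (hs : s = finrank ℝ E * (p'⁻¹ + q'⁻¹)) (hsn : s < finrank ℝ E) :
    ∃ C ≠ ∞, ∀ f g : E → ℝ≥0∞, Measurable f → Measurable g →
      ∫⁻ x, f x ^ q ∂μ = 1 → ∫⁻ y, g y ^ p ∂μ = 1 →
      ∫⁻ x, (∫⁻ y, ENNReal.ofReal (‖x - y‖ ^ (-s)) * g y ∂μ) * f x ∂μ ≤ C := by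
  obtain ⟨A, hA, hA_le⟩ := exists_lintegral_mul_lintegral_min_mul_norm_sub_rpow_le μ hp hq hs hsn
  obtain ⟨B, hB, hB_le⟩ := exists_lintegral_mul_lintegral_min_mul_norm_sub_rpow_le μ hq hp
    (by rw [hs, add_comm]) hsn
  refine ⟨A + B, by finiteness, fun f g hf hg hf_norm hg_norm => ?_⟩
  let k (x y : E) : ℝ≥0∞ := ENNReal.ofReal (‖x - y‖ ^ (-s))
  let P (x y : E) : ℝ≥0∞ := f x * (min (g y) (f x ^ (q / p)) * k x y)
  let Q (x y : E) : ℝ≥0∞ := g y * (min (f x) (g y ^ (p / q)) * k x y)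
  have hP : Measurable P.uncurry := by fun_prop
  have hQ : Measurable Q.uncurry := by fun_prop
  have hpq : q / p * (p / q) = 1 := by
    rw [div_mul_div_cancel₀ hp.ne_zero, div_self hq.ne_zero]
  calc ∫⁻ x, (∫⁻ y, k x y * g y ∂μ) * f x ∂μ = ∫⁻ x, ∫⁻ y, f x * g y * k x y ∂μ ∂μ := by
        refine lintegral_congr fun x => ?_
        rw [← lintegral_mul_const _ (by fun_prop)]
        exact lintegral_congr fun y => by ring
    _ ≤ ∫⁻ x, ∫⁻ y, P x y + Q x y ∂μ ∂μ := by
        refine lintegral_mono fun x => lintegral_mono fun y => ?_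
        simp only [P, Q]
        rw [← mul_assoc, ← mul_assoc, ← add_mul]
        gcongr
        exact mul_le_mul_min_rpow_add (div_pos hq.pos hp.pos) hpq _ _
    _ = ∫⁻ x, ∫⁻ y, P x y ∂μ ∂μ + ∫⁻ y, ∫⁻ x, Q x y ∂μ ∂μ := by
        rw [lintegral_lintegral_swap (f := fun y x => Q x y) (by fun_prop),
          ← lintegral_add_left hP.lintegral_prod_right]
        exact lintegral_congr fun x => lintegral_add_left (by fun_prop) _
    _ ≤ A + B := by
        gcongr
        · refine le_of_eq_of_le (lintegral_congr fun x => ?_) (hA_le f g hf hg hf_norm hg_norm)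
          exact lintegral_const_mul _ (by fun_prop)
        · refine le_of_eq_of_le (lintegral_congr fun y => ?_) (hB_le g f hg hf hg_norm hf_norm)
          simp only [Q, k, norm_sub_rev _ y]
          exact lintegral_const_mul _ (by fun_prop)

theorem exists_eLpNorm'_lintegral_norm_sub_rpow_mul_le (hp : p.HolderConjugate p')
    (hq : q.HolderConjugate q') (hs : s = finrank ℝ E * (p'⁻¹ + q'⁻¹)) (hsn : s < finrank ℝ E) :
    ∃ C ≠ ∞, ∀ g : E → ℝ≥0∞, Measurable g →
      eLpNorm' (fun x => ∫⁻ y, ENNReal.ofReal (‖x - y‖ ^ (-s)) * g y ∂μ) q' μ ≤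
        C * eLpNorm' g p μ := by
  obtain ⟨C, hC, hC_le⟩ := exists_lintegral_lintegral_norm_sub_rpow_mul_mul_le μ hp hq hs hsn
  refine ⟨C + 1, by finiteness, fun g hg => ?_⟩
  obtain hN₀ | hN₀ := eq_or_ne (eLpNorm' g p μ) 0
  · have hg₀ : g =ᵐ[μ] 0 := (eLpNorm'_eq_zero_iff hp.pos hg.aestronglyMeasurable).1 hN₀
    have (x : E) : ∫⁻ y, ENNReal.ofReal (‖x - y‖ ^ (-s)) * g y ∂μ = 0 := by
      rw [lintegral_eq_zero_iff (by fun_prop)]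
      filter_upwards [hg₀] with y hy using by simp [hy]
    simp [this, eLpNorm', hq.symm.pos]
  obtain hN | hN := eq_or_ne (eLpNorm' g p μ) ∞
  · simp [hN]
  have hI_eq : ∫⁻ y, g y ^ p ∂μ = eLpNorm' g p μ ^ p := by
    simpa only [enorm_eq_self] using lintegral_rpow_enorm_eq_rpow_eLpNorm' (f := g) hp.pos
  have hI₀ : ∫⁻ y, g y ^ p ∂μ ≠ 0 := by simp [hI_eq, hN₀, hN]
  have hI : ∫⁻ y, g y ^ p ∂μ ≠ ∞ := by simp [hI_eq, hN₀, hN]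
  refine eLpNorm'_le_of_forall_lintegral_mul_le hq.symm fun h hh h_norm => ?_
  let g₁ := ENNReal.funMulInvSnorm g p μ
  have hg₁ : Measurable g₁ := hg.mul_const _
  have h_eq (y : E) : g y = g₁ y * eLpNorm' g p μ :=
    ENNReal.fun_eq_funMulInvSnorm_mul_eLpNorm g hI₀ hI
  calc ∫⁻ x, (∫⁻ y, ENNReal.ofReal (‖x - y‖ ^ (-s)) * g y ∂μ) * h x ∂μ
      = (∫⁻ x, (∫⁻ y, ENNReal.ofReal (‖x - y‖ ^ (-s)) * g₁ y ∂μ) * h x ∂μ) * eLpNorm' g p μ := by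
        simp_rw +singlePass [h_eq]
        simp_rw [← mul_assoc, lintegral_mul_const' _ _ hN, mul_right_comm,
          lintegral_mul_const' _ _ hN]
    _ ≤ (C + 1) * eLpNorm' g p μ := by
        gcongr
        exact (hC_le h g₁ hh hg₁ h_norm
          (ENNReal.lintegral_rpow_funMulInvSnorm_eq_one hp.pos hI₀ hI)).trans le_self_add

end FractionalIntegration

section Interpolation

variable {X Y E F : Type*} [MeasurableSpace X] [MeasurableSpace Y]
  {μ : Measure X} {ν : Measure Y}

theorem lintegral_rpow_le_of_measure_lt_le {u : Y → ℝ} {v : X → ℝ} (hu₀ : 0 ≤ᵐ[ν] u)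
    (hu : AEMeasurable u ν) (hv₀ : 0 ≤ᵐ[μ] v) (hv : AEMeasurable v μ) {r s : ℝ} (hr : 0 < r)
    (hsr : s < r)
    (H : ∀ α > 0, ν {y | α < u y} ≤ ENNReal.ofReal (α ^ (-s)) * μ {x | α ≤ v x}) :
    ∫⁻ y, ENNReal.ofReal (u y ^ r) ∂ν ≤
      ENNReal.ofReal (r / (r - s)) * ∫⁻ x, ENNReal.ofReal (v x ^ (r - s)) ∂μ := by
  have hrs : 0 < r - s := sub_pos.2 hsr
  calc ∫⁻ y, ENNReal.ofReal (u y ^ r) ∂ν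
      = ENNReal.ofReal r *
          ∫⁻ α in Set.Ioi 0, ν {y | α < u y} * ENNReal.ofReal (α ^ (r - 1)) :=
        lintegral_rpow_eq_lintegral_meas_lt_mul ν hu₀ hu hr
    _ ≤ ENNReal.ofReal r *
          ∫⁻ α in Set.Ioi 0, μ {x | α ≤ v x} * ENNReal.ofReal (α ^ (r - s - 1)) := by
        refine mul_le_mul_right ?_ _
        refine setLIntegral_mono' measurableSet_Ioi fun α (hα : 0 < α) => ?_
        refine (mul_le_mul_left (H α hα) _).trans_eq ?_
        rw [mul_comm (ENNReal.ofReal _), mul_assoc, ← ENNReal.ofReal_mul (by positivity),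
          ← Real.rpow_add hα]
        ring_nf
    _ = ENNReal.ofReal (r / (r - s)) * ∫⁻ x, ENNReal.ofReal (v x ^ (r - s)) ∂μ := by
        rw [lintegral_rpow_eq_lintegral_meas_le_mul μ hv₀ hv hrs, ← mul_assoc,
          ← ENNReal.ofReal_mul (by positivity), div_mul_cancel₀ _ hrs.ne']

variable [NormedAddCommGroup E] [NormedAddCommGroup F]

theorem setLIntegral_enorm_compl_le {f : X → E} (hf : StronglyMeasurable f) {p c α : ℝ}
    (hp : 0 ≤ p) (hc : 0 < c) :
    ∫⁻ x in {x | α ≤ c * ‖f x‖ ^ (1 - p)}ᶜ, ‖f x‖ₑ ∂μ ≤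
      ENNReal.ofReal (α / c) * ∫⁻ x, ‖f x‖ₑ ^ p ∂μ := by
  rw [← lintegral_const_mul _ (hf.enorm.pow_const p)]
  refine (setLIntegral_mono (by fun_prop) fun x hx => ?_).trans (setLIntegral_le_lintegral _ _)
  obtain hfx | hfx := (norm_nonneg (f x)).eq_or_lt
  · simp [norm_eq_zero.1 hfx.symm]
  have hle : ‖f x‖ ≤ α / c * ‖f x‖ ^ p := by
    calc ‖f x‖ = ‖f x‖ ^ (1 - p) * ‖f x‖ ^ p := by rw [← Real.rpow_add hfx]; simp
      _ ≤ α / c * ‖f x‖ ^ p := by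
        gcongr
        rw [le_div_iff₀' hc]
        exact (not_le.1 (show ¬α ≤ c * ‖f x‖ ^ (1 - p) from hx)).le
  rw [← ofReal_norm, ENNReal.ofReal_rpow_of_nonneg hfx.le hp]
  have hαc : 0 ≤ α / c := nonneg_of_mul_nonneg_left (hfx.le.trans hle) (by positivity)
  rw [← ENNReal.ofReal_mul hαc]
  exact ENNReal.ofReal_le_ofReal hle

theorem enorm_sq_mul_ofReal_norm_rpow {p r b c : ℝ} (hpr : p.HolderConjugate r) (hb : 0 ≤ b)
    (hc : 0 ≤ c) (v : E) :
    ENNReal.ofReal b * ‖v‖ₑ ^ 2 * ENNReal.ofReal ((c * ‖v‖ ^ (1 - p)) ^ (r - 2)) =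
      ENNReal.ofReal (b * c ^ (r - 2)) * ‖v‖ₑ ^ p := by
  obtain hv | hv := (norm_nonneg v).eq_or_lt
  · simp [norm_eq_zero.1 hv.symm, hpr.pos]
  have hexp : ‖v‖ ^ p = ‖v‖ ^ 2 * (‖v‖ ^ (1 - p)) ^ (r - 2) := by
    rw [← Real.rpow_mul hv.le, ← Real.rpow_two, ← Real.rpow_add hv]
    congr 1
    linear_combination hpr.mul_eq_add
  rw [← ofReal_norm, ENNReal.ofReal_rpow_of_nonneg hv.le hpr.nonneg, ← ENNReal.ofReal_pow hv.le,
    ← ENNReal.ofReal_mul hb, ← ENNReal.ofReal_mul (by positivity),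
    ← ENNReal.ofReal_mul (by positivity), hexp, Real.mul_rpow hc (by positivity)]
  ring_nf

theorem ofReal_half_le_of_ofReal_le_add {α : ℝ} (hα : 0 ≤ α) {b c : ℝ≥0∞}
    (hc : c ≤ ENNReal.ofReal (α / 2)) (h : ENNReal.ofReal α ≤ b + c) :
    ENNReal.ofReal (α / 2) ≤ b := by
  refine ENNReal.le_of_add_le_add_right (ENNReal.ofReal_ne_top (r := α / 2)) ?_
  rw [← ENNReal.ofReal_add (by positivity) (by positivity), add_halves]
  exact h.trans (by gcongr)

variable {T : (X → E) → Y → F} {A B n p r α : ℝ} {f : X → E}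

/-- The truncation height depends on `α` so that the high part of `f` contributes at most `α / 2`
through the `L¹ → L^∞` bound; Chebyshev's inequality and the `L²` bound handle the low part. -/
theorem measure_lt_norm_le_of_forall_enorm_le
    (hT : ∀ f, Integrable f μ → AEStronglyMeasurable (T f) ν)
    (hT_add : ∀ f g, Integrable f μ → Integrable g μ → ∀ y, ‖T (f + g) y‖ₑ ≤ ‖T f y‖ₑ + ‖T g y‖ₑ)
    (hT₁ : ∀ f, Integrable f μ → ∀ y, ‖T f y‖ₑ ≤ ENNReal.ofReal A * ∫⁻ x, ‖f x‖ₑ ∂μ)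
    (hT₂ : ∀ f, Integrable f μ → MemLp f 2 μ →
      ∫⁻ y, ‖T f y‖ₑ ^ 2 ∂ν ≤ ENNReal.ofReal B * ∫⁻ x, ‖f x‖ₑ ^ 2 ∂μ)
    (hA : 0 < A) (hp : 0 ≤ p) (hn : 0 < n) (hα : 0 < α)
    (hf : StronglyMeasurable f) (hf₁ : Integrable f μ) (hf₂ : MemLp f 2 μ)
    (hfn : ∫⁻ x, ‖f x‖ₑ ^ p ∂μ = ENNReal.ofReal n) :
    ν {y | α < ‖T f y‖} ≤ ENNReal.ofReal (α ^ (-2 : ℝ)) *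
      μ.withDensity (fun x => ENNReal.ofReal (4 * B) * ‖f x‖ₑ ^ 2)
        {x | α ≤ 2 * A * n * ‖f x‖ ^ (1 - p)} := by
  let S := {x | α ≤ 2 * A * n * ‖f x‖ ^ (1 - p)}
  have hS : MeasurableSet S :=
    measurableSet_le measurable_const ((hf.norm.measurable.pow_const _).const_mul _)
  have h_high (y : Y) : ‖T (Sᶜ.indicator f) y‖ₑ ≤ ENNReal.ofReal (α / 2) := by
    refine (hT₁ _ (hf₁.indicator hS.compl) y).trans ?_
    simp_rw [enorm_indicator_eq_indicator_enorm]
    rw [lintegral_indicator hS.compl]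
    refine (mul_le_mul_right (setLIntegral_enorm_compl_le hf hp (by positivity)) _).trans_eq ?_
    rw [hfn, ← ENNReal.ofReal_mul (by positivity), ← ENNReal.ofReal_mul hA.le]
    congr 1
    field_simp
  have h_sub : {y | α < ‖T f y‖} ⊆
      {y | ENNReal.ofReal (α / 2) ^ 2 ≤ ‖T (S.indicator f) y‖ₑ ^ 2} := by
    intro y (hy : α < ‖T f y‖)
    have h_split := hT_add _ _ (hf₁.indicator hS) (hf₁.indicator hS.compl) y
    rw [Set.indicator_self_add_compl] at h_split
    refine pow_le_pow_left'
      (ofReal_half_le_of_ofReal_le_add hα.le (h_high y) (le_trans ?_ h_split)) 2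
    rw [← ofReal_norm]
    gcongr
  calc ν {y | α < ‖T f y‖}
      ≤ (∫⁻ y, ‖T (S.indicator f) y‖ₑ ^ 2 ∂ν) / ENNReal.ofReal (α / 2) ^ 2 :=
        (measure_mono h_sub).trans (meas_ge_le_lintegral_div
          ((hT _ (hf₁.indicator hS)).enorm.pow_const 2) (by simp [hα]) (by finiteness))
    _ ≤ (ENNReal.ofReal B * ∫⁻ x in S, ‖f x‖ₑ ^ 2 ∂μ) / ENNReal.ofReal (α / 2) ^ 2 := by
        gcongr
        refine (hT₂ _ (hf₁.indicator hS) (hf₂.indicator hS)).trans_eq ?_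
        rw [← lintegral_indicator hS]
        congr 2 with x
        by_cases hx : x ∈ S <;> simp [hx]
    _ = _ := by
        rw [withDensity_apply _ hS, lintegral_const_mul' _ _ ENNReal.ofReal_ne_top, ← mul_assoc,
          ← ENNReal.ofReal_mul (by positivity), ENNReal.mul_div_right_comm,
          ← ENNReal.ofReal_pow (by positivity), ← ENNReal.ofReal_div_of_pos (by positivity)]
        congr 2
        rw [Real.rpow_neg hα.le, Real.rpow_two]
        field_simp
        ring

theorem lintegral_rpow_enorm_le_of_forall_enorm_le
    (hT : ∀ f, Integrable f μ → AEStronglyMeasurable (T f) ν)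
    (hT_add : ∀ f g, Integrable f μ → Integrable g μ → ∀ y, ‖T (f + g) y‖ₑ ≤ ‖T f y‖ₑ + ‖T g y‖ₑ)
    (hT₁ : ∀ f, Integrable f μ → ∀ y, ‖T f y‖ₑ ≤ ENNReal.ofReal A * ∫⁻ x, ‖f x‖ₑ ∂μ)
    (hT₂ : ∀ f, Integrable f μ → MemLp f 2 μ →
      ∫⁻ y, ‖T f y‖ₑ ^ 2 ∂ν ≤ ENNReal.ofReal B * ∫⁻ x, ‖f x‖ₑ ^ 2 ∂μ)
    (hA : 0 < A) (hB : 0 < B) (hr : 2 < r) (hpr : p.HolderConjugate r)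
    (hf : StronglyMeasurable f) (hf₁ : Integrable f μ) (hf₂ : MemLp f 2 μ) :
    ∫⁻ y, ‖T f y‖ₑ ^ r ∂ν ≤ ENNReal.ofReal (r / (r - 2) * (4 * B) * (2 * A) ^ (r - 2)) *
      (∫⁻ x, ‖f x‖ₑ ^ p ∂μ) ^ (r - 1) := by
  have : 0 < r - 2 := sub_pos.2 hr
  have hr₁ := hpr.symm.sub_one_pos
  obtain hN₀ | hN₀ := eq_or_ne (∫⁻ x, ‖f x‖ₑ ^ p ∂μ) 0
  · have hf₀ : ∫⁻ x, ‖f x‖ₑ ∂μ = 0 := by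
      rw [lintegral_eq_zero_iff (by fun_prop)] at hN₀ ⊢
      filter_upwards [hN₀] with x hx
      simpa [hpr.pos] using hx
    have hTf (y : Y) : T f y = 0 := by simpa [hf₀] using hT₁ f hf₁ y
    simp [hTf, hpr.symm.pos]
  obtain hN | hN := eq_or_ne (∫⁻ x, ‖f x‖ₑ ^ p ∂μ) ∞
  · rw [hN, ENNReal.top_rpow_of_pos hr₁, ENNReal.mul_top (ENNReal.ofReal_pos.2 (by positivity)).ne']
    exact le_top
  obtain ⟨n, hn, hfn⟩ : ∃ n : ℝ, 0 < n ∧ ∫⁻ x, ‖f x‖ₑ ^ p ∂μ = ENNReal.ofReal n :=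
    ⟨_, ENNReal.toReal_pos hN₀ hN, (ENNReal.ofReal_toReal hN).symm⟩
  have hv : Measurable fun x => 2 * A * n * ‖f x‖ ^ (1 - p) :=
    (hf.norm.measurable.pow_const _).const_mul _
  have h_enorm (y : Y) : ‖T f y‖ₑ ^ r = ENNReal.ofReal (‖T f y‖ ^ r) := by
    rw [← ofReal_norm, ENNReal.ofReal_rpow_of_nonneg (norm_nonneg _) hpr.symm.nonneg]
  simp_rw [h_enorm]
  refine (lintegral_rpow_le_of_measure_lt_le (ae_of_all _ fun _ => norm_nonneg _)
    (hT f hf₁).norm.aemeasurable (ae_of_all _ fun _ => by positivity) hv.aemeasurable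
    hpr.symm.pos hr fun α hα => measure_lt_norm_le_of_forall_enorm_le hT hT_add hT₁ hT₂
      hA hpr.nonneg hn hα hf hf₁ hf₂ hfn).trans_eq ?_
  rw [lintegral_withDensity_eq_lintegral_mul _ ((hf.enorm.pow_const 2).const_mul _)
    (hv.pow_const _).ennreal_ofReal]
  simp_rw [Pi.mul_apply, enorm_sq_mul_ofReal_norm_rpow hpr (by positivity : 0 ≤ 4 * B)
    (by positivity : 0 ≤ 2 * A * n)]
  rw [lintegral_const_mul' _ _ ENNReal.ofReal_ne_top, hfn, ENNReal.ofReal_rpow_of_pos hn,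
    ← ENNReal.ofReal_mul (by positivity), ← ENNReal.ofReal_mul (by positivity),
    ← ENNReal.ofReal_mul (by positivity), Real.mul_rpow (by positivity) hn.le,
    show r - 1 = r - 2 + 1 by ring, Real.rpow_add_one hn.ne']
  ring_nf

end Interpolation

section Fourier

open FourierTransform SchwartzMap

variable {V F : Type*} [NormedAddCommGroup V] [InnerProductSpace ℝ V] [FiniteDimensional ℝ V]
  [MeasurableSpace V] [BorelSpace V] [NormedAddCommGroup F] [InnerProductSpace ℂ F]
  [CompleteSpace F]

theorem fourier_ae_eq_fourier_toLp {f : V → F} (hf₁ : Integrable f) (hf₂ : MemLp f 2) :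
    𝓕 f =ᵐ[volume] (𝓕 (hf₂.toLp f) : Lp F 2 (volume : Measure V)) := by
  have h_cont : Continuous (𝓕 f) :=
    VectorFourier.fourierIntegral_continuous Real.continuous_fourierChar
      (L := innerₗ V) continuous_inner hf₁
  refine ae_eq_of_integral_contDiff_smul_eq h_cont.locallyIntegrable
    ((Lp.memLp _).locallyIntegrable one_le_two) fun φ hφ hφc => ?_
  let Φ : 𝓢(V, ℂ) :=
    (hφc.comp_left (g := ((↑) : ℝ → ℂ)) (by simp)).toSchwartzMap (ofRealCLM.contDiff.comp hφ)
  have h_dual : ∫ x, 𝓕 Φ x • f x = ∫ x, Φ x • 𝓕 f x := by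
    have := VectorFourier.integral_fourierIntegral_smul_eq_flip (𝕜 := ℝ) (μ := volume)
      (ν := volume) (L := innerₗ V) (f := fun x => Φ x) Real.continuous_fourierChar
      continuous_inner Φ.integrable hf₁
    rwa [flip_innerₗ] at this
  have h_distrib := congrArg (· Φ) (Lp.fourier_toTemperedDistribution_eq (hf₂.toLp f))
  simp only [TemperedDistribution.fourier_apply, Lp.toTemperedDistribution_apply] at h_distrib
  have h_congr : ∫ x, 𝓕 Φ x • hf₂.toLp f x = ∫ x, 𝓕 Φ x • f x := by
    refine integral_congr_ae ?_
    filter_upwards [hf₂.coeFn_toLp] with x hx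
    rw [hx]
  rw [h_congr, h_dual] at h_distrib
  have hΦ (x : V) (v : F) : Φ x • v = φ x • v := Complex.coe_smul (φ x) v
  simpa only [hΦ] using h_distrib

theorem eLpNorm_two_fourier {f : V → F} (hf₁ : Integrable f) (hf₂ : MemLp f 2) :
    eLpNorm (𝓕 f) 2 = eLpNorm f 2 := by
  rw [eLpNorm_congr_ae (fourier_ae_eq_fourier_toLp hf₁ hf₂), ← Lp.enorm_def,
    ← ofReal_norm, Lp.norm_fourier_eq, ofReal_norm, Lp.enorm_toLp]

end Fourier

section FreePropagator

open FourierTransform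

variable {d : ℕ} {t : ℝ}

/-- The unimodular quadratic phase `e^{i|y|²/(4t)}`; the free propagator is multiplication by a
chirp, a Fourier transform, a dilation and multiplication by another chirp. -/
def chirp {V : Type*} [NormedAddCommGroup V] (t : ℝ) (y : V) : ℂ :=
  Complex.exp ((‖y‖ ^ 2 / (4 * t) : ℝ) * I)

theorem norm_chirp {V : Type*} [NormedAddCommGroup V] (t : ℝ) (y : V) : ‖chirp t y‖ = 1 :=
  norm_exp_ofReal_mul_I _

theorem continuous_chirp {V : Type*} [NormedAddCommGroup V] (t : ℝ) :
    Continuous (chirp t : V → ℂ) := by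
  unfold chirp
  fun_prop

theorem measurable_Sfree (d : ℕ) :
    Measurable fun p : (Fin d → ℝ) × (Fin d → ℝ) × ℝ => Sfree d p.1 p.2.1 p.2.2 := by
  unfold Sfree
  fun_prop

theorem norm_Sfree (x y : Fin d → ℝ) (ht : t ≠ 0) :
    ‖Sfree d x y t‖ = (4 * Real.pi * |t|) ^ (-(d : ℝ) / 2) := by
  have h_phase : Complex.exp (I * ((∑ i, (x i - y i) ^ 2 : ℝ) : ℂ) / ((4 * t : ℝ) : ℂ)) =
      Complex.exp (((∑ i, (x i - y i) ^ 2) / (4 * t) : ℝ) * I) := by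
    push_cast
    ring_nf
  have h_exponent : (-(d : ℂ) / 2) = ((-(d : ℝ) / 2 : ℝ) : ℂ) := by push_cast; rfl
  rw [Sfree, norm_mul, h_phase, norm_exp_ofReal_mul_I, mul_one,
    norm_cpow_of_ne_zero (by simp [ht, Real.pi_ne_zero]), h_exponent, ofReal_re, ofReal_im]
  simp [abs_of_pos Real.pi_pos]

theorem Sfree_eq_mul_fourierChar_smul_chirp (x y : Fin d → ℝ) (ht : t ≠ 0) :
    Sfree d x y t = Sfree d x 0 t *
      Real.fourierChar (-inner ℝ (WithLp.toLp 2 y) (WithLp.toLp 2 ((4 * Real.pi * t)⁻¹ • x))) •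
        chirp t (WithLp.toLp 2 y) := by
  have h_inner : inner ℝ (WithLp.toLp 2 y) (WithLp.toLp 2 ((4 * Real.pi * t)⁻¹ • x)) =
      (4 * Real.pi * t)⁻¹ * ∑ i, x i * y i := by
    simp [PiLp.inner_apply, Finset.mul_sum, mul_assoc]
  have h_sq : ∑ i, (x i - y i) ^ 2 =
      ∑ i, x i ^ 2 - 2 * ∑ i, x i * y i + ‖WithLp.toLp 2 y‖ ^ 2 := by
    rw [EuclideanSpace.real_norm_sq_eq, Finset.mul_sum, ← Finset.sum_sub_distrib,
      ← Finset.sum_add_distrib]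
    exact Finset.sum_congr rfl fun i _ => by simp; ring
  have hpi : (Real.pi : ℂ) ≠ 0 := ofReal_ne_zero.2 Real.pi_ne_zero
  have ht' : (t : ℂ) ≠ 0 := ofReal_ne_zero.2 ht
  rw [Circle.smul_def, smul_eq_mul, Real.fourierChar_apply, h_inner, chirp, ← Complex.exp_add,
    Sfree, Sfree, mul_assoc (_ ^ _), ← Complex.exp_add, h_sq]
  congr 2
  simp only [Pi.zero_apply, sub_zero]
  push_cast
  field_simp
  ring

/-- The free Schrödinger evolution `e^{itΔ} f` at the point `x`, for `t ≠ 0`. -/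
def freePropagator (d : ℕ) (f : (Fin d → ℝ) → ℂ) (x : Fin d → ℝ) (t : ℝ) : ℂ :=
  ∫ y, Sfree d x y t * f y

/-- The datum `f` moved to Euclidean space and multiplied by the chirp, so that the evolution at
time `t` is, up to a phase and a dilation, its Fourier transform. -/
def chirped (t : ℝ) (f : (Fin d → ℝ) → ℂ) (y : EuclideanSpace ℝ (Fin d)) : ℂ :=
  chirp t y * f y.ofLp

theorem freePropagator_eq_mul_fourier (f : (Fin d → ℝ) → ℂ) (x : Fin d → ℝ) (ht : t ≠ 0) :
    freePropagator d f x t =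
      Sfree d x 0 t * 𝓕 (chirped t f) (WithLp.toLp 2 ((4 * Real.pi * t)⁻¹ • x)) := by
  rw [Real.fourier_eq, ← (PiLp.volume_preserving_toLp (Fin d)).integral_comp
    (MeasurableEquiv.toLp 2 (Fin d → ℝ)).measurableEmbedding, ← integral_const_mul]
  refine integral_congr_ae (ae_of_all _ fun y => ?_)
  simp only [Sfree_eq_mul_fourierChar_smul_chirp x y ht, chirped, Circle.smul_def, smul_eq_mul]
  ring

theorem norm_chirped (f : (Fin d → ℝ) → ℂ) (y : EuclideanSpace ℝ (Fin d)) :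
    ‖chirped t f y‖ = ‖f y.ofLp‖ := by
  rw [chirped, norm_mul, norm_chirp, one_mul]

theorem memLp_chirped {f : (Fin d → ℝ) → ℂ} {p : ℝ≥0∞} (hf : MemLp f p) :
    MemLp (chirped t f) p := by
  have hf' := hf.comp_measurePreserving (PiLp.volume_preserving_ofLp (Fin d))
  exact hf'.of_le ((continuous_chirp t).aestronglyMeasurable.mul hf'.1)
    (ae_of_all _ fun y => (norm_chirped f y).le)

theorem eLpNorm_two_fourier_chirped {f : (Fin d → ℝ) → ℂ} (hf₁ : Integrable f)
    (hf₂ : MemLp f 2) : eLpNorm (𝓕 (chirped t f)) 2 = eLpNorm f 2 := by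
  rw [eLpNorm_two_fourier (memLp_one_iff_integrable.1
      (memLp_chirped (memLp_one_iff_integrable.2 hf₁))) (memLp_chirped hf₂),
    ← eLpNorm_comp_measurePreserving hf₂.1 (PiLp.volume_preserving_ofLp (Fin d))]
  exact eLpNorm_congr_norm_ae (ae_of_all _ fun y => norm_chirped f y)

theorem lintegral_enorm_sq {α F : Type*} [MeasurableSpace α] {μ : Measure α}
    [NormedAddCommGroup F] (f : α → F) : ∫⁻ x, ‖f x‖ₑ ^ 2 ∂μ = eLpNorm f 2 μ ^ 2 := by
  simpa using (eLpNorm_nnreal_pow_eq_lintegral (f := f) (μ := μ) (p := 2) two_ne_zero).symm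

theorem lintegral_enorm_freePropagator_sq {f : (Fin d → ℝ) → ℂ} (ht : t ≠ 0)
    (hf₁ : Integrable f) (hf₂ : MemLp f 2) :
    ∫⁻ x, ‖freePropagator d f x t‖ₑ ^ 2 = ∫⁻ x, ‖f x‖ₑ ^ 2 := by
  have hc : 0 < 4 * Real.pi * |t| := by positivity
  have hc' : 4 * Real.pi * t ≠ 0 := mul_ne_zero (by positivity) ht
  have h_abs : |4 * Real.pi * t| = 4 * Real.pi * |t| := by
    rw [abs_mul, abs_of_pos (by positivity)]
  have h_cancel : ENNReal.ofReal ((4 * Real.pi * |t|) ^ (-(d : ℝ) / 2)) ^ 2 *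
      ENNReal.ofReal ((4 * Real.pi * |t|) ^ (d : ℝ)) = 1 := by
    rw [← ENNReal.ofReal_pow (by positivity), ← ENNReal.ofReal_mul (by positivity),
      ← Real.rpow_natCast, ← Real.rpow_mul hc.le, ← Real.rpow_add hc]
    simp
  have h_enorm (x : Fin d → ℝ) : ‖freePropagator d f x t‖ₑ ^ 2 =
      ENNReal.ofReal ((4 * Real.pi * |t|) ^ (-(d : ℝ) / 2)) ^ 2 *
        ‖𝓕 (chirped t f) (WithLp.toLp 2 ((4 * Real.pi * t)⁻¹ • x))‖ₑ ^ 2 := by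
    rw [freePropagator_eq_mul_fourier f x ht, enorm_mul, mul_pow, ← ofReal_norm (Sfree ..),
      norm_Sfree x 0 ht]
  simp_rw [h_enorm]
  rw [lintegral_const_mul' _ _ (by finiteness), lintegral_eq_mul_lintegral_comp_smul _ _ hc',
    ← mul_assoc, h_abs, Module.finrank_fin_fun, h_cancel, one_mul]
  simp_rw [inv_smul_smul₀ hc']
  rw [(PiLp.volume_preserving_toLp (Fin d)).lintegral_comp_emb
      (MeasurableEquiv.toLp 2 (Fin d → ℝ)).measurableEmbedding (fun y => ‖𝓕 (chirped t f) y‖ₑ ^ 2),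
    lintegral_enorm_sq, lintegral_enorm_sq, eLpNorm_two_fourier_chirped hf₁ hf₂]

theorem integrable_Sfree_mul {f : (Fin d → ℝ) → ℂ} (hf : Integrable f) (x : Fin d → ℝ)
    (ht : t ≠ 0) : Integrable fun y => Sfree d x y t * f y :=
  hf.bdd_mul ((measurable_Sfree d).comp (by fun_prop : Measurable fun y => (x, y, t))
    |>.aestronglyMeasurable) (ae_of_all _ fun y => (norm_Sfree x y ht).le)

theorem aestronglyMeasurable_freePropagator {f : (Fin d → ℝ) → ℂ} (hf : Integrable f) :
    AEStronglyMeasurable (freePropagator d f · t) :=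
  AEStronglyMeasurable.integral_prod_right' (f := fun p => Sfree d p.1 p.2 t * f p.2)
    (((measurable_Sfree d).comp
      (by fun_prop : Measurable fun p : (Fin d → ℝ) × (Fin d → ℝ) => (p.1, p.2, t))
      |>.aestronglyMeasurable).mul hf.1.comp_snd)

theorem freePropagator_add {f g : (Fin d → ℝ) → ℂ} (hf : Integrable f) (hg : Integrable g)
    (x : Fin d → ℝ) (ht : t ≠ 0) :
    freePropagator d (f + g) x t = freePropagator d f x t + freePropagator d g x t := by
  simp only [freePropagator, Pi.add_apply, mul_add]
  exact integral_add (integrable_Sfree_mul hf x ht) (integrable_Sfree_mul hg x ht)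

theorem enorm_freePropagator_le (f : (Fin d → ℝ) → ℂ) (x : Fin d → ℝ) (ht : t ≠ 0) :
    ‖freePropagator d f x t‖ₑ ≤
      ENNReal.ofReal ((4 * Real.pi * |t|) ^ (-(d : ℝ) / 2)) * ∫⁻ y, ‖f y‖ₑ := by
  refine (enorm_integral_le_lintegral_enorm _).trans_eq ?_
  simp_rw [enorm_mul, ← ofReal_norm (Sfree ..), norm_Sfree x _ ht]
  exact lintegral_const_mul' _ _ ENNReal.ofReal_ne_top

theorem mul_rpow_mul_rpow_one_div {k b c τ δ r : ℝ} (hk : 0 ≤ k) (hb : 0 ≤ b) (hc : 0 ≤ c)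
    (hτ : 0 ≤ τ) (hr : r ≠ 0) :
    (k * (b * (c * τ) ^ (-δ / 2)) ^ (r - 2)) ^ (1 / r) =
      (k * (b * c ^ (-δ / 2)) ^ (r - 2)) ^ (1 / r) * τ ^ (-(δ * (1 / 2 - 1 / r))) := by
  have h_exponent : -δ / 2 * (r - 2) * (1 / r) = -(δ * (1 / 2 - 1 / r)) := by field_simp
  rw [← h_exponent, Real.rpow_mul hτ, Real.rpow_mul hτ, ← Real.mul_rpow (by positivity)
    (by positivity), mul_assoc k, ← Real.mul_rpow (by positivity) (by positivity), mul_assoc b,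
    ← Real.mul_rpow hc hτ]

theorem exists_eLpNorm'_freePropagator_le (d : ℕ) {p r : ℝ} (hpr : p.HolderConjugate r)
    (hr : 2 ≤ r) :
    ∃ C ≠ (∞ : ℝ≥0∞), ∀ {t : ℝ}, t ≠ 0 → ∀ {f : (Fin d → ℝ) → ℂ}, StronglyMeasurable f →
      Integrable f → MemLp f 2 → eLpNorm' (freePropagator d f · t) r volume ≤
        C * ENNReal.ofReal (|t| ^ (-(d * (1 / 2 - 1 / r)))) * eLpNorm' f p volume := by
  obtain rfl | hr := hr.eq_or_lt
  · obtain rfl : p = 2 := by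
      have := hpr.mul_eq_add
      linarith
    refine ⟨1, ENNReal.one_ne_top, fun ht f _ hf₁ hf₂ => ?_⟩
    simp [eLpNorm', lintegral_enorm_freePropagator_sq ht hf₁ hf₂]
  have : 0 < r - 2 := sub_pos.2 hr
  refine ⟨ENNReal.ofReal ((r / (r - 2) * (4 * 1) *
    (2 * (4 * Real.pi) ^ (-(d : ℝ) / 2)) ^ (r - 2)) ^ (1 / r)), ENNReal.ofReal_ne_top,
    fun {t} ht f hf hf₁ hf₂ => ?_⟩
  have h_interp := lintegral_rpow_enorm_le_of_forall_enorm_le (T := (freePropagator d · · t))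
    (B := 1) (fun f hf => aestronglyMeasurable_freePropagator hf)
    (fun f g hf hg x => (congrArg enorm (freePropagator_add hf hg x ht)).trans_le
      (enorm_add_le _ _))
    (fun f _ x => enorm_freePropagator_le f x ht)
    (fun f hf₁ hf₂ => by simp [lintegral_enorm_freePropagator_sq ht hf₁ hf₂])
    (by positivity) one_pos hr hpr hf hf₁ hf₂
  have hp : (r - 1) * (1 / r) = 1 / p := by
    rw [one_div p, ← hpr.symm.one_sub_inv, sub_mul, mul_one_div_cancel hpr.symm.ne_zero, one_mul,
      one_div]
  calc eLpNorm' (freePropagator d f · t) r volume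
      ≤ (_ * _) ^ (1 / r) := ENNReal.rpow_le_rpow h_interp (one_div_nonneg.2 hpr.symm.nonneg)
    _ = _ := by
      rw [ENNReal.mul_rpow_of_nonneg _ _ (one_div_nonneg.2 hpr.symm.nonneg), ← ENNReal.rpow_mul,
        hp, ENNReal.ofReal_rpow_of_nonneg (by positivity) (one_div_nonneg.2 hpr.symm.nonneg),
        mul_rpow_mul_rpow_one_div (by positivity) zero_le_two (by positivity) (abs_nonneg t)
          hpr.symm.ne_zero, ENNReal.ofReal_mul (by positivity), eLpNorm']

end FreePropagator

section Bessel

open scoped Nat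

variable {a w z ζ t s ν : ℝ}

/-- The coefficients of `reducedBessel ν`. -/
def reducedBesselCoeff (ν : ℝ) (k : ℕ) : ℝ :=
  (-1 / 4) ^ k / (k ! * Real.Gamma (k + ν + 1))

/-- The entire function `w ↦ ∑ (-1/4)^k / (k! Γ(k+ν+1)) w^k`, through which the Bessel function
is `J_ν(s) = (s/2)^ν · reducedBessel ν (s²)`. -/
def reducedBessel (ν w : ℝ) : ℝ :=
  ∑' k : ℕ, reducedBesselCoeff ν k * w ^ k

theorem succ_mul_reducedBesselCoeff_succ (ν : ℝ) (k : ℕ) :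
    (k + 1) * reducedBesselCoeff ν (k + 1) = -(1 / 4) * reducedBesselCoeff (ν + 1) k := by
  have hk : (k + 1 : ℝ) ≠ 0 := k.cast_add_one_ne_zero
  have hΓ : ((k + 1 : ℕ) : ℝ) + ν + 1 = k + (ν + 1) + 1 := by push_cast; ring
  rw [reducedBesselCoeff, reducedBesselCoeff, hΓ, Nat.factorial_succ, pow_succ]
  push_cast
  rw [mul_assoc (k + 1 : ℝ), mul_div_assoc', mul_div_mul_left _ _ hk]
  ring

theorem reducedBesselCoeff_eq_mul (hν : -1 < ν) (k : ℕ) :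
    reducedBesselCoeff ν k = (k + ν + 1) * reducedBesselCoeff (ν + 1) k := by
  have hk : 0 < k + ν + 1 := by linarith [k.cast_nonneg (α := ℝ)]
  rw [reducedBesselCoeff, reducedBesselCoeff, ← add_assoc, Real.Gamma_add_one hk.ne']
  field_simp

theorem hasSum_reducedBessel (hν : -1 < ν) (w : ℝ) :
    HasSum (fun k => reducedBesselCoeff ν k * w ^ k) (reducedBessel ν w) := by
  refine (summable_of_ratio_norm_eventually_le one_half_lt_one ?_).hasSum
  filter_upwards [tendsto_natCast_atTop_atTop.eventually_ge_atTop (|w| - ν)] with k hk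
  have hkν : |w| + 1 ≤ k + ν + 1 := by linarith
  have hkν₀ : 0 < k + ν + 1 := by linarith [abs_nonneg w]
  have h_ratio : reducedBesselCoeff ν (k + 1) =
      -reducedBesselCoeff ν k / (4 * (k + 1) * (k + ν + 1)) := by
    rw [eq_div_iff (by positivity), reducedBesselCoeff_eq_mul hν k]
    linear_combination 4 * (k + ν + 1) * succ_mul_reducedBesselCoeff_succ ν k
  have h_half : |w| / (4 * (k + 1) * (k + ν + 1)) ≤ 1 / 2 := by
    rw [div_le_div_iff₀ (by positivity) two_pos]
    nlinarith [hkν, abs_nonneg w, k.cast_nonneg (α := ℝ)]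
  rw [h_ratio, pow_succ, norm_mul, norm_mul, norm_div, norm_neg, norm_mul (reducedBesselCoeff ν k),
    Real.norm_eq_abs w, Real.norm_of_nonneg (by positivity : 0 ≤ 4 * (k + 1) * (k + ν + 1))]
  calc ‖reducedBesselCoeff ν k‖ / (4 * (k + 1) * (k + ν + 1)) * (‖w ^ k‖ * |w|)
      = |w| / (4 * (k + 1) * (k + ν + 1)) * (‖reducedBesselCoeff ν k‖ * ‖w ^ k‖) := by ring
    _ ≤ 1 / 2 * (‖reducedBesselCoeff ν k‖ * ‖w ^ k‖) := by gcongr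

theorem reducedBesselCoeff_mul_deriv_pow_succ (ν w : ℝ) (k : ℕ) :
    reducedBesselCoeff ν (k + 1) * ((k + 1 : ℕ) * w ^ (k + 1 - 1)) =
      -(1 / 4) * (reducedBesselCoeff (ν + 1) k * w ^ k) := by
  rw [Nat.add_sub_cancel, Nat.cast_add_one]
  linear_combination w ^ k * succ_mul_reducedBesselCoeff_succ ν k

theorem hasSum_reducedBesselCoeff_mul_deriv_pow (hν : -1 < ν) (w : ℝ) :
    HasSum (fun k : ℕ => reducedBesselCoeff ν k * (k * w ^ (k - 1)))
      (-(1 / 4) * reducedBessel (ν + 1) w) := by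
  rw [← hasSum_nat_add_iff' 1]
  simp_rw [reducedBesselCoeff_mul_deriv_pow_succ]
  have hν' : -1 < ν + 1 := by linarith
  simpa only [Finset.range_one, Finset.sum_singleton, Nat.cast_zero, zero_mul, mul_zero, sub_zero]
    using (hasSum_reducedBessel hν' w).mul_left (-(1 / 4))

theorem hasDerivAt_reducedBessel (hν : -1 < ν) (w : ℝ) :
    HasDerivAt (reducedBessel ν) (-(1 / 4) * reducedBessel (ν + 1) w) w := by
  have hR : 0 < |w| + 1 := by positivity
  have h_bound : Summable fun k : ℕ => ‖reducedBesselCoeff ν k * (k * (|w| + 1) ^ (k - 1))‖ :=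
    (hasSum_reducedBesselCoeff_mul_deriv_pow hν _).summable.norm
  rw [← (hasSum_reducedBesselCoeff_mul_deriv_pow hν w).tsum_eq]
  refine hasDerivAt_tsum_of_isPreconnected h_bound Metric.isOpen_ball
    (convex_ball (0 : ℝ) (|w| + 1)).isPreconnected
    (fun k y _ => (hasDerivAt_pow k y).const_mul _) (fun k y hy => ?_) (Metric.mem_ball_self hR)
    (hasSum_reducedBessel hν 0).summable (by simp)
  have hy : |y| ≤ |w| + 1 := (mem_ball_zero_iff.1 hy).le
  simp only [norm_mul, norm_pow, Real.norm_eq_abs, abs_of_pos hR]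
  gcongr

theorem reducedBessel_eq_sub (hν : -1 < ν) (w : ℝ) :
    reducedBessel ν w = (ν + 1) * reducedBessel (ν + 1) w - w / 4 * reducedBessel (ν + 2) w := by
  have hν' : -1 < ν + 1 := by linarith
  have h_deriv := (hasSum_reducedBesselCoeff_mul_deriv_pow hν' w).mul_left w
  have h_sum := (hasSum_reducedBessel hν' w).mul_left (ν + 1)
  rw [show ν + 1 + 1 = ν + 2 by ring] at h_deriv
  have h_term (k : ℕ) : reducedBesselCoeff ν k * w ^ k =
      (ν + 1) * (reducedBesselCoeff (ν + 1) k * w ^ k) +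
        w * (reducedBesselCoeff (ν + 1) k * (k * w ^ (k - 1))) := by
    rw [reducedBesselCoeff_eq_mul hν]
    obtain _ | k := k
    · simp
    · rw [Nat.add_sub_cancel, pow_succ]
      ring
  have h_add := h_sum.add h_deriv
  simp_rw [← h_term] at h_add
  rw [(hasSum_reducedBessel hν w).unique h_add]
  ring

/-- The energy of `reducedBessel ν`, as a solution of `4 w R'' + 4 (ν + 1) R' + R = 0`. -/
def reducedBesselEnergy (ν w : ℝ) : ℝ :=
  reducedBessel ν w ^ 2 + w / 4 * reducedBessel (ν + 1) w ^ 2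

theorem hasDerivAt_reducedBesselEnergy (hν : -1 < ν) (w : ℝ) :
    HasDerivAt (reducedBesselEnergy ν) (-((2 * ν + 1) / 4 * reducedBessel (ν + 1) w ^ 2)) w := by
  have h₀ := hasDerivAt_reducedBessel hν w
  have h₁ := hasDerivAt_reducedBessel (by linarith : -1 < ν + 1) w
  refine ((h₀.pow 2).add (((hasDerivAt_id w).div_const 4).mul (h₁.pow 2))).congr_deriv ?_
  rw [show ν + 1 + 1 = ν + 2 by ring, reducedBessel_eq_sub hν w]
  simp only [id, Pi.pow_apply]
  push_cast
  ring

theorem antitone_reducedBesselEnergy (hν : -(1 / 2) ≤ ν) : Antitone (reducedBesselEnergy ν) :=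
  antitone_of_hasDerivAt_nonpos (hasDerivAt_reducedBesselEnergy (by linarith)) fun w =>
    neg_nonpos.2 (mul_nonneg (by linarith) (sq_nonneg _))

theorem reducedBessel_zero (ν : ℝ) : reducedBessel ν 0 = 1 / Real.Gamma (ν + 1) := by
  rw [reducedBessel, tsum_eq_single 0 fun k hk => by simp [hk]]
  simp [reducedBesselCoeff]

theorem abs_reducedBessel_le (hν : -(1 / 2) ≤ ν) (hw : 0 ≤ w) :
    |reducedBessel ν w| ≤ 1 / Real.Gamma (ν + 1) := by
  have h_energy : reducedBessel ν w ^ 2 ≤ (1 / Real.Gamma (ν + 1)) ^ 2 := by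
    calc reducedBessel ν w ^ 2 ≤ reducedBesselEnergy ν w :=
          le_add_of_nonneg_right (by positivity)
      _ ≤ reducedBesselEnergy ν 0 := antitone_reducedBesselEnergy hν hw
      _ = (1 / Real.Gamma (ν + 1)) ^ 2 := by simp [reducedBesselEnergy, reducedBessel_zero]
  exact abs_le_of_sq_le_sq h_energy
    (one_div_nonneg.2 (Real.Gamma_pos_of_pos (by linarith)).le)

theorem besselJ_eq_mul_reducedBessel (ν : ℝ) (hs : 0 < s) :
    besselJ ν s = (s / 2) ^ ν * reducedBessel ν (s ^ 2) := by
  rw [besselJ, reducedBessel, ← tsum_mul_left]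
  refine tsum_congr fun k => ?_
  have h_pow : (s / 2) ^ (2 * (k : ℝ) + ν) = (1 / 4) ^ k * (s ^ 2) ^ k * (s / 2) ^ ν := by
    rw [Real.rpow_add (by positivity), ← mul_pow, show 1 / 4 * s ^ 2 = (s / 2) ^ 2 by ring,
      ← pow_mul]
    norm_cast
  rw [h_pow, reducedBesselCoeff, show (-1 / 4 : ℝ) = -1 * (1 / 4) by norm_num, mul_pow]
  ring

theorem abs_besselJ_le (hν : -(1 / 2) ≤ ν) (hs : 0 < s) :
    |besselJ ν s| ≤ (s / 2) ^ ν / Real.Gamma (ν + 1) := by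
  rw [besselJ_eq_mul_reducedBessel ν hs, abs_mul, abs_of_pos (by positivity : 0 < (s / 2) ^ ν),
    div_eq_mul_one_div _ (Real.Gamma _)]
  exact mul_le_mul_of_nonneg_left (abs_reducedBessel_le hν (sq_nonneg s)) (by positivity)

theorem norm_SaK_le (ha : 0 ≤ a) (hz : 0 < z) (hζ : 0 < ζ) (ht : t ≠ 0) :
    ‖SaK a z ζ t‖ ≤ 2 ^ (-a) / Real.Gamma ((a + 1) / 2) * |t| ^ (-((a + 1) / 2)) := by
  have ht' : 0 < |t| := abs_pos.2 ht
  have h_phase₁ : ‖cexp (-I * (Real.sign t : ℝ) * ((a + 1) * Real.pi / 4 : ℝ))‖ = 1 := by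
    simp [norm_exp]
  have h_phase₂ : ‖cexp (I * (z ^ 2 + ζ ^ 2 : ℝ) / (4 * t : ℝ))‖ = 1 := by
    rw [norm_exp, div_ofReal_re, re_mul_ofReal]
    simp
  set s := z * ζ / (2 * |t|)
  have hs : 0 < s := by positivity
  have h_bessel := abs_besselJ_le (by linarith : -(1 / 2) ≤ (a - 1) / 2) hs
  rw [SaK, norm_mul, norm_mul, norm_mul, norm_div, h_phase₁, h_phase₂, mul_one, norm_real,
    norm_real, norm_real, Real.norm_of_nonneg (by positivity), Real.norm_of_nonneg (by positivity),
    Real.norm_eq_abs]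
  calc 1 / (2 * |t|) ^ ((a + 1) / 2) * s ^ ((1 - a) / 2) * |besselJ ((a - 1) / 2) s|
      ≤ 1 / (2 * |t|) ^ ((a + 1) / 2) * s ^ ((1 - a) / 2) *
          ((s / 2) ^ ((a - 1) / 2) / Real.Gamma ((a - 1) / 2 + 1)) := by gcongr
    _ = (s ^ ((1 - a) / 2) * s ^ ((a - 1) / 2)) / (2 ^ ((a + 1) / 2) * 2 ^ ((a - 1) / 2)) /
          Real.Gamma ((a + 1) / 2) * |t| ^ (-((a + 1) / 2)) := by
      rw [Real.mul_rpow zero_le_two ht'.le, Real.div_rpow hs.le zero_le_two,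
        Real.rpow_neg ht'.le, show (a - 1) / 2 + 1 = (a + 1) / 2 by ring]
      field_simp
    _ = 2 ^ (-a) / Real.Gamma ((a + 1) / 2) * |t| ^ (-((a + 1) / 2)) := by
      rw [← Real.rpow_add hs, ← Real.rpow_add two_pos, show (1 - a) / 2 + (a - 1) / 2 = 0 by ring,
        show (a + 1) / 2 + (a - 1) / 2 = a by ring, Real.rpow_zero, one_div,
        Real.rpow_neg two_pos.le]

end Bessel

section HalfSpace

open scoped SchwartzMap

variable {d : ℕ} {a p q r t z : ℝ}

theorem mixNorm_eq_eLpNorm' (d : ℕ) (q r : ℝ) (Φ : (Fin d → ℝ) → ℝ → ℂ) :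
    mixNorm d q r Φ = eLpNorm' (fun t => eLpNorm' (Φ · t) r volume) q volume := by
  simp only [mixNorm, eLpNorm', enorm_eq_self, ← ENNReal.rpow_mul, one_div_mul_eq_div]
  rfl

/-- The weighted half-line measure `z^a dz` on `(0, ∞)`, the transverse factor of `ωa d a`. -/
def halfLineMeasure (a : ℝ) : Measure ℝ :=
  ((volume : Measure ℝ).restrict (Set.Ioi 0)).withDensity fun z => ENNReal.ofReal (z ^ a)

instance (a : ℝ) : SFinite (halfLineMeasure a) := by
  unfold halfLineMeasure
  infer_instance

theorem ae_halfLineMeasure_pos (a : ℝ) : ∀ᵐ ζ ∂halfLineMeasure a, 0 < ζ :=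
  (withDensity_absolutelyContinuous _ _).ae_le (ae_restrict_mem measurableSet_Ioi)

theorem lintegral_halfLineMeasure_le (a : ℝ) (g : ℝ → ℝ≥0∞) :
    ∫⁻ ζ, g ζ ∂halfLineMeasure a ≤ ∫⁻ ζ in Set.Ioi (0 : ℝ), g ζ * ENNReal.ofReal (ζ ^ a) := by
  refine (lintegral_withDensity_le_lintegral_mul _ (by fun_prop) g).trans_eq ?_
  simp only [Pi.mul_apply, mul_comm]

/-- The restriction `x ↦ F (x, v)` of a Schwartz function on a product to a slice. -/
def schwartzSlice {E V : Type*} [NormedAddCommGroup E] [NormedSpace ℝ E] [NormedAddCommGroup V]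
    [NormedSpace ℝ V] (F : 𝓢(E × V, ℂ)) (v : V) : 𝓢(E, ℂ) :=
  SchwartzMap.compCLMOfAntilipschitz (g := fun x => (x, v)) (K := 1) ℝ
    (by simpa [Pi.add_def] using
      (ContinuousLinearMap.inl ℝ E V).hasTemperateGrowth.add (.const (0, v)))
    (AntilipschitzWith.of_le_mul_dist fun x y => by simp) F

/-- The total size `∫ |e^{itΔ} f(·, ζ)| (x) ζ^a dζ` of the free evolutions of the slices of `f`. It
bounds the half-space evolution at `x` up to the size of the transverse kernel `SaK`. -/
def sliceEnvelope (a : ℝ) (f : (Fin d → ℝ) × ℝ → ℂ) (x : Fin d → ℝ) (t : ℝ) : ℝ≥0∞ :=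
  ∫⁻ ζ, ‖freePropagator d (fun y => f (y, ζ)) x t‖ₑ ∂halfLineMeasure a

theorem measurable_freePropagator {α : Type*} [MeasurableSpace α] {f : α → (Fin d → ℝ) → ℂ}
    (hf : Measurable f.uncurry) {x : α → Fin d → ℝ} (hx : Measurable x) {t : α → ℝ}
    (ht : Measurable t) : Measurable fun b => freePropagator d (f b) (x b) (t b) := by
  have h_integrand : Measurable fun w : α × (Fin d → ℝ) =>
      Sfree d (x w.1) w.2 (t w.1) * f w.1 w.2 :=
    ((measurable_Sfree d).comp (by fun_prop : Measurable fun w : α × (Fin d → ℝ) =>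
      (x w.1, w.2, t w.1))).mul hf
  exact h_integrand.stronglyMeasurable.integral_prod_right'.measurable

theorem measurable_sliceEnvelope (a : ℝ) {α : Type*} [MeasurableSpace α]
    {f : α → (Fin d → ℝ) × ℝ → ℂ} (hf : Measurable f.uncurry) {x : α → Fin d → ℝ}
    (hx : Measurable x) {t : α → ℝ} (ht : Measurable t) :
    Measurable fun b => sliceEnvelope a (f b) (x b) (t b) := by
  have h_slice : Measurable fun w : (α × ℝ) × (Fin d → ℝ) => f w.1.1 (w.2, w.1.2) :=
    hf.comp (by fun_prop : Measurable fun w : (α × ℝ) × (Fin d → ℝ) => (w.1.1, w.2, w.1.2))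
  exact (measurable_freePropagator (f := fun (c : α × ℝ) y => f c.1 (y, c.2)) h_slice
    (hx.comp measurable_fst) (ht.comp measurable_fst)).enorm.lintegral_prod_right'

theorem enorm_integral_SK_mul_le (ha : 0 ≤ a) (hz : 0 < z) (ht : t ≠ 0)
    (f : (Fin d → ℝ) × ℝ → ℂ) (x : Fin d → ℝ) :
    ‖∫ Y, SK d a (x, z) Y t * f Y ∂ωa d a‖ₑ ≤
      ENNReal.ofReal (2 ^ (-a) / Real.Gamma ((a + 1) / 2) * |t| ^ (-((a + 1) / 2))) *
        sliceEnvelope a f x t := by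
  by_cases h_int : Integrable (fun Y => SK d a (x, z) Y t * f Y) (ωa d a)
  swap
  · simp [integral_undef h_int]
  have h_slice (ζ : ℝ) : ∫ y, SK d a (x, z) (y, ζ) t * f (y, ζ) =
      SaK a z ζ t * freePropagator d (fun y => f (y, ζ)) x t := by
    simp only [SK, freePropagator, mul_assoc, integral_const_mul]
  have h_prod : ωa d a = (volume : Measure (Fin d → ℝ)).prod (halfLineMeasure a) := rfl
  rw [h_prod] at h_int ⊢
  rw [integral_prod_symm _ h_int, sliceEnvelope, ← lintegral_const_mul' _ _ ENNReal.ofReal_ne_top]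
  refine (enorm_integral_le_lintegral_enorm _).trans (lintegral_mono_ae ?_)
  filter_upwards [ae_halfLineMeasure_pos a] with ζ hζ
  rw [h_slice, enorm_mul, ← ofReal_norm (SaK ..)]
  gcongr
  exact norm_SaK_le ha hz hζ ht

theorem exists_eLpNorm'_sliceEnvelope_le (d : ℕ) (a : ℝ) (hpr : p.HolderConjugate r)
    (hr : 2 ≤ r) :
    ∃ C ≠ (∞ : ℝ≥0∞), ∀ {t : ℝ}, t ≠ 0 → ∀ f : 𝓢((Fin d → ℝ) × ℝ, ℂ),
      eLpNorm' (sliceEnvelope a f · t) r volume ≤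
        C * ENNReal.ofReal (|t| ^ (-(d * (1 / 2 - 1 / r)))) *
          ∫⁻ ζ, eLpNorm' (fun y => f (y, ζ)) p volume ∂halfLineMeasure a := by
  obtain ⟨C, hC, h_dispersive⟩ := exists_eLpNorm'_freePropagator_le d hpr hr
  refine ⟨C, hC, fun {t} ht f => ?_⟩
  have h_meas : Measurable fun w : (Fin d → ℝ) × ℝ =>
      ‖freePropagator d (fun y => f (y, w.2)) w.1 t‖ₑ :=
    (measurable_freePropagator (f := fun (w : (Fin d → ℝ) × ℝ) y => f (y, w.2))
      (f.continuous.measurable.comp (by fun_prop)) measurable_fst measurable_const).enorm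
  calc eLpNorm' (sliceEnvelope a f · t) r volume
      ≤ ∫⁻ ζ, eLpNorm' (freePropagator d (fun y => f (y, ζ)) · t) r volume ∂halfLineMeasure a :=
        eLpNorm'_lintegral_le hpr.symm.lt.le h_meas
    _ ≤ ∫⁻ ζ, C * ENNReal.ofReal (|t| ^ (-(d * (1 / 2 - 1 / r)))) *
          eLpNorm' (fun y => f (y, ζ)) p volume ∂halfLineMeasure a :=
        lintegral_mono fun ζ => h_dispersive ht (schwartzSlice f ζ).continuous.stronglyMeasurable
          (schwartzSlice f ζ).integrable ((schwartzSlice f ζ).memLp 2 volume)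
    _ = _ := lintegral_const_mul' _ _ (ENNReal.mul_ne_top hC ENNReal.ofReal_ne_top)

theorem enorm_integral_integral_SK_mul_le (ha : 0 ≤ a) (hz : 0 < z)
    (F : ((Fin d → ℝ) × ℝ) × ℝ → ℂ) (x : Fin d → ℝ) (t : ℝ) :
    ‖∫ τ, ∫ Y, SK d a (x, z) Y (t - τ) * F (Y, τ) ∂ωa d a‖ₑ ≤
      ∫⁻ τ, ENNReal.ofReal (2 ^ (-a) / Real.Gamma ((a + 1) / 2) * |t - τ| ^ (-((a + 1) / 2))) *
        sliceEnvelope a (fun Y => F (Y, τ)) x (t - τ) := by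
  refine (enorm_integral_le_lintegral_enorm _).trans (lintegral_mono_ae ?_)
  filter_upwards [Measure.ae_ne volume t] with τ hτ
  exact enorm_integral_SK_mul_le ha hz (sub_ne_zero.2 hτ.symm) _ x

theorem eLpNorm'_const_mul_ennreal {α : Type*} [MeasurableSpace α] {μ : Measure α} (hr : 0 < r)
    {c : ℝ≥0∞} (hc : c ≠ ∞) (f : α → ℝ≥0∞) :
    eLpNorm' (fun x => c * f x) r μ = c * eLpNorm' f r μ := by
  simp only [eLpNorm', enorm_eq_self, ENNReal.mul_rpow_of_nonneg _ _ hr.le]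
  rw [lintegral_const_mul' _ _ (ENNReal.rpow_ne_top_of_nonneg hr.le hc),
    ENNReal.mul_rpow_of_nonneg _ _ (one_div_nonneg.2 hr.le), ← ENNReal.rpow_mul,
    mul_one_div_cancel hr.ne', ENNReal.rpow_one]

theorem exists_eLpNorm'_integral_integral_SK_mul_le (d : ℕ) (ha : 0 ≤ a)
    (hpr : p.HolderConjugate r) (hr : 2 ≤ r) :
    ∃ C ≠ (∞ : ℝ≥0∞), ∀ {z : ℝ}, 0 < z → ∀ (F : 𝓢(((Fin d → ℝ) × ℝ) × ℝ, ℂ)) (t : ℝ),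
      eLpNorm' (fun x => ∫ τ, ∫ Y, SK d a (x, z) Y (t - τ) * F (Y, τ) ∂ωa d a) r volume ≤
        C * ∫⁻ τ, ENNReal.ofReal (‖t - τ‖ ^ (-((a + 1) / 2 + d * (1 / 2 - 1 / r)))) *
          ∫⁻ ζ, eLpNorm' (fun y => F ((y, ζ), τ)) p volume ∂halfLineMeasure a := by
  obtain ⟨C, hC, h_envelope⟩ := exists_eLpNorm'_sliceEnvelope_le d a hpr hr
  set B : ℝ := 2 ^ (-a) / Real.Gamma ((a + 1) / 2)
  have hB : 0 ≤ B := div_nonneg (by positivity) (Real.Gamma_pos_of_pos (by linarith)).le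
  have hCB : ENNReal.ofReal B * C ≠ ∞ := ENNReal.mul_ne_top ENNReal.ofReal_ne_top hC
  refine ⟨ENNReal.ofReal B * C, hCB, fun {z} hz F t => ?_⟩
  have h_meas : Measurable fun w : (Fin d → ℝ) × ℝ =>
      ENNReal.ofReal (B * |t - w.2| ^ (-((a + 1) / 2))) *
        sliceEnvelope a (fun Y => F (Y, w.2)) w.1 (t - w.2) :=
    (by fun_prop : Measurable _).mul
      (measurable_sliceEnvelope a (f := fun (w : (Fin d → ℝ) × ℝ) Y => F (Y, w.2))
        (F.continuous.measurable.comp (by fun_prop)) measurable_fst (measurable_snd.const_sub t))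
  have h_slice (τ : ℝ) (hτ : t - τ ≠ 0) :
      eLpNorm' (fun x => ENNReal.ofReal (B * |t - τ| ^ (-((a + 1) / 2))) *
        sliceEnvelope a (fun Y => F (Y, τ)) x (t - τ)) r volume ≤
      ENNReal.ofReal B * C *
        (ENNReal.ofReal (‖t - τ‖ ^ (-((a + 1) / 2 + d * (1 / 2 - 1 / r)))) *
          ∫⁻ ζ, eLpNorm' (fun y => F ((y, ζ), τ)) p volume ∂halfLineMeasure a) := by
    rw [eLpNorm'_const_mul_ennreal hpr.symm.pos ENNReal.ofReal_ne_top, Real.norm_eq_abs, neg_add,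
      Real.rpow_add (abs_pos.2 hτ), ENNReal.ofReal_mul hB, ENNReal.ofReal_mul (by positivity)]
    refine (mul_le_mul_right (h_envelope hτ (schwartzSlice F τ)) _).trans_eq ?_
    simp only [mul_assoc, mul_left_comm C]
    rfl
  calc eLpNorm' (fun x => ∫ τ, ∫ Y, SK d a (x, z) Y (t - τ) * F (Y, τ) ∂ωa d a) r volume
      ≤ eLpNorm' (fun x => ∫⁻ τ, ENNReal.ofReal (B * |t - τ| ^ (-((a + 1) / 2))) *
          sliceEnvelope a (fun Y => F (Y, τ)) x (t - τ)) r volume :=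
        eLpNorm'_mono_enorm_ae hpr.symm.nonneg (ae_of_all _ fun x =>
          enorm_integral_integral_SK_mul_le ha hz F x t)
    _ ≤ ∫⁻ τ, eLpNorm' (fun x => ENNReal.ofReal (B * |t - τ| ^ (-((a + 1) / 2))) *
          sliceEnvelope a (fun Y => F (Y, τ)) x (t - τ)) r volume :=
        eLpNorm'_lintegral_le hpr.symm.lt.le h_meas
    _ ≤ _ := lintegral_mono_ae ((Measure.ae_ne volume t).mono fun τ hτ =>
        h_slice τ (sub_ne_zero.2 hτ.symm))
    _ = _ := lintegral_const_mul' _ _ hCB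

theorem measurable_eLpNorm'_slice {F : ((Fin d → ℝ) × ℝ) × ℝ → ℂ} (hF : Measurable F) (p : ℝ) :
    Measurable fun w : ℝ × ℝ => eLpNorm' (fun y => F ((y, w.2), w.1)) p volume := by
  have h_slice : Measurable fun w : (ℝ × ℝ) × (Fin d → ℝ) => F ((w.2, w.1.2), w.1.1) :=
    hF.comp (by fun_prop)
  exact (h_slice.enorm.pow_const p).lintegral_prod_right'.pow_const _

theorem exists_mixNorm_integral_integral_SK_mul_le {q' : ℝ} (ha : 0 ≤ a)
    (hpr : p.HolderConjugate r) (hr : 2 ≤ r) (hq : q'.HolderConjugate q) (hq₂ : 2 < q)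
    (hadm : 2 / q + d / r = (d + a + 1) / 2) :
    ∃ C ≠ (∞ : ℝ≥0∞), ∀ {z : ℝ}, 0 < z → ∀ F : 𝓢(((Fin d → ℝ) × ℝ) × ℝ, ℂ),
      mixNorm d q r (fun x t => ∫ τ, ∫ Y, SK d a (x, z) Y (t - τ) * F (Y, τ) ∂ωa d a) ≤
        C * ∫⁻ ζ, mixNorm d q' p (fun x t => F ((x, ζ), t)) ∂halfLineMeasure a := by
  obtain ⟨C₁, hC₁, h_decay⟩ := exists_eLpNorm'_integral_integral_SK_mul_le d ha hpr hr
  have h_exponent : (a + 1) / 2 + d * (1 / 2 - 1 / r) = 2 / q := by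
    linear_combination -hadm
  obtain ⟨C₂, hC₂, h_frac⟩ := exists_eLpNorm'_lintegral_norm_sub_rpow_mul_le (E := ℝ) volume
    hq hq (s := 2 / q) (by simp; ring) (by simpa using (div_lt_one hq.symm.pos).2 hq₂)
  refine ⟨C₁ * C₂, ENNReal.mul_ne_top hC₁ hC₂, fun {z} hz F => ?_⟩
  set g : ℝ → ℝ≥0∞ := fun τ =>
    ∫⁻ ζ, eLpNorm' (fun y => F ((y, ζ), τ)) p volume ∂halfLineMeasure a
  have h_meas := measurable_eLpNorm'_slice F.continuous.measurable p
  simp only [mixNorm_eq_eLpNorm']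
  calc eLpNorm' (fun t => eLpNorm' (fun x => ∫ τ, ∫ Y, SK d a (x, z) Y (t - τ) * F (Y, τ) ∂ωa d a)
          r volume) q volume
      ≤ eLpNorm' (fun t => C₁ * ∫⁻ τ, ENNReal.ofReal (‖t - τ‖ ^ (-(2 / q))) * g τ) q volume :=
        eLpNorm'_mono_enorm_ae hq.symm.nonneg (ae_of_all _ fun t =>
          h_exponent ▸ h_decay hz F t)
    _ = C₁ * eLpNorm' (fun t => ∫⁻ τ, ENNReal.ofReal (‖t - τ‖ ^ (-(2 / q))) * g τ) q volume :=
        eLpNorm'_const_mul_ennreal hq.symm.pos hC₁ _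
    _ ≤ C₁ * (C₂ * eLpNorm' g q' volume) := by
        gcongr
        exact h_frac g h_meas.lintegral_prod_right'
    _ ≤ C₁ * (C₂ * ∫⁻ ζ, eLpNorm' (fun τ => eLpNorm' (fun y => F ((y, ζ), τ)) p volume) q' volume
          ∂halfLineMeasure a) := by
        gcongr
        exact eLpNorm'_lintegral_le hq.lt.le h_meas
    _ = _ := (mul_assoc ..).symm

end HalfSpace

/-- The `𝕋_a^*𝕋_a` estimate for `a ≥ 0`: if `r ≥ 2`, `2 < q < ∞` and
`2/q + d/r = (d+a+1)/2`, then for Schwartz `F`, the function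
`W(X,t) = ∫_ℝ ∫ 𝕊_a(X,Y,t-τ) F(Y,τ) dω_a(Y) dτ` satisfies
`sup_{z>0} ‖W(·,z,·)‖_{L^q_t L^r_x} ≤ C ∫₀^∞ ‖F(·,ζ,·)‖_{L^{q'}_t L^{r'}_x} ζ^a dζ`. -/
theorem TstarT_strichartz_nonneg
    (d : ℕ) (hd : 1 ≤ d) (a : ℝ) (ha : 0 ≤ a) (q r : ℝ)
    (hr : 2 ≤ r) (hq : 2 < q)
    (hadm : 2 / q + (d : ℝ) / r = ((d : ℝ) + a + 1) / 2) :
    ∃ C > (0 : ℝ), ∀ F : SchwartzMap (((Fin d → ℝ) × ℝ) × ℝ) ℂ,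
      (⨆ (z : ℝ) (_ : 0 < z),
          mixNorm d q r (fun x t =>
            ∫ τ : ℝ, ∫ Y, SK d a (x, z) Y (t - τ) * F (Y, τ) ∂(ωa d a)))
        ≤ ENNReal.ofReal C *
            ∫⁻ ζ in Set.Ioi (0 : ℝ),
              mixNorm d (q / (q - 1)) (r / (r - 1)) (fun x t => F ((x, ζ), t)) *
                ENNReal.ofReal (ζ ^ a) := by
  have hpr : (r / (r - 1)).HolderConjugate r :=
    (Real.HolderConjugate.conjExponent (by linarith)).symm
  have hqq : (q / (q - 1)).HolderConjugate q :=
    (Real.HolderConjugate.conjExponent (by linarith)).symm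
  obtain ⟨C, hC, h_strichartz⟩ := exists_mixNorm_integral_integral_SK_mul_le ha hpr hr hqq hq hadm
  have hC_le : C ≤ ENNReal.ofReal (C.toReal + 1) := by
    rw [ENNReal.le_ofReal_iff_toReal_le hC (by positivity)]
    linarith
  refine ⟨C.toReal + 1, by positivity, fun F => iSup₂_le fun z hz => ?_⟩
  exact (h_strichartz hz F).trans (mul_le_mul' hC_le (lintegral_halfLineMeasure_le a _))

end
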